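/- arXiv:1604.06282 — 6 statements merged into one kernel-verified Lean document; each statement's English description precedes it below -/
import Mathlib

section
/- Let X₀ ⊆ dom F and Y₀ ⊆ dom G be such that X₀ × Y₀ contains a saddle point (x*, y*). Then the restricted primal-dual gap 𝔊_{X₀×Y₀} and the restricted error functionals 𝔈^p_{Y₀} and 𝔈^d_{X₀} are nonnegative, and for every (x, y) ∈ X × Y one has 𝔊_{X₀×Y₀}(x,y) = 𝔈^p_{Y₀}(x) + 𝔈^d_{X₀}(y), 𝔈^p_{Y₀}(x) ≤ 𝔊_{{x*}×Y₀}(x,y), and 𝔈^d_{X₀}(y) ≤ 𝔊_{X₀×{y*}}(x,y). -/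
/-! At a saddle point both suprema are attained: `K xs ∈ ∂G(ys)` says that `ys` maximizes
`⟪K xs, y'⟫ - G y'`, and `-K* ys ∈ ∂F(xs)` says that `xs` maximizes `⟪-K* ys, x'⟫ - F x'`. Hence the
constants subtracted in the primal and dual error functionals are the real numbers
`±(F xs + ⟪K xs, ys⟫ - G ys)`, which cancel in the sum. The remaining double supremum in the gap
splits, because its terms separate in `x'` and `y'`; this is the identity `gap = primal + dual`.
Nonnegativity of the primal error is the subgradient inequality for `F` together with the choice
`y' = ys` in the supremum, and dually. Finally, the primal error does not depend on `X₀`, so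
replacing `X₀` by `{xs}` in the identity and dropping the nonnegative dual error bounds it by the
gap over `{xs} × Y₀`; the dual bound is symmetric. -/

open scoped RealInnerProductSpace
open Filter

noncomputable section

variable {X Y : Type*} [NormedAddCommGroup X] [InnerProductSpace ℝ X] [CompleteSpace X]
  [NormedAddCommGroup Y] [InnerProductSpace ℝ Y] [CompleteSpace Y]

/-- The convex subdifferential of an extended-real-valued functional. -/
def ediff (F : X → EReal) (x : X) : Set X :=
  {ξ : X | ∀ z : X, F x + ((⟪ξ, z - x⟫ : ℝ) : EReal) ≤ F z}

/-- The effective domain. -/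
def edom (F : X → EReal) : Set X := {x : X | F x ≠ ⊤}

/-- Properness: nowhere `⊥` and somewhere finite. -/
def Proper (F : X → EReal) : Prop := (∀ x, F x ≠ ⊥) ∧ ∃ x, F x ≠ ⊤

/-- Convexity of an extended-real-valued functional. -/
def ConvexE (F : X → EReal) : Prop :=
  ∀ x z : X, ∀ l : ℝ, 0 ≤ l → l ≤ 1 →
    F (l • x + (1 - l) • z) ≤ (l : EReal) * F x + ((1 - l : ℝ) : EReal) * F z

/-- Saddle points of the Lagrangian `L(x,y) = ⟪Kx, y⟫ + F(x) - G(y)`. -/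
def IsSaddle (K : X →L[ℝ] Y) (F : X → EReal) (G : Y → EReal) (xs : X) (ys : Y) : Prop :=
  xs ∈ edom F ∧ ys ∈ edom G ∧
    (-(ContinuousLinearMap.adjoint K) ys) ∈ ediff F xs ∧ K xs ∈ ediff G ys

/-- The restricted primal-dual gap `𝔊_{X₀ × Y₀}`. -/
def gap (K : X →L[ℝ] Y) (F : X → EReal) (G : Y → EReal)
    (X₀ : Set X) (Y₀ : Set Y) (x : X) (y : Y) : EReal :=
  ⨆ x' ∈ X₀, ⨆ y' ∈ Y₀,
    (((⟪K x, y'⟫ - ⟪K x', y⟫ - (G y').toReal - (F x').toReal : ℝ) : EReal) + F x + G y)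

/-- The restricted primal error functional `𝔈^p_{Y₀}` (relative to the saddle point `xs`). -/
def epRestr (K : X →L[ℝ] Y) (F : X → EReal) (G : Y → EReal)
    (Y₀ : Set Y) (xs : X) (x : X) : EReal :=
  (F x + ⨆ y' ∈ Y₀, ((⟪K x, y'⟫ - (G y').toReal : ℝ) : EReal))
    - (F xs + ⨆ y' ∈ Y₀, ((⟪K xs, y'⟫ - (G y').toReal : ℝ) : EReal))

/-- The restricted dual error functional `𝔈^d_{X₀}` (relative to the saddle point `ys`). -/
def edRestr (K : X →L[ℝ] Y) (F : X → EReal) (G : Y → EReal)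
    (X₀ : Set X) (ys : Y) (y : Y) : EReal :=
  (G y + ⨆ x' ∈ X₀, ((⟪-(ContinuousLinearMap.adjoint K) y, x'⟫ - (F x').toReal : ℝ) : EReal))
    - (G ys + ⨆ x' ∈ X₀, ((⟪-(ContinuousLinearMap.adjoint K) ys, x'⟫ - (F x').toReal : ℝ) : EReal))

/-- No side condition is needed, since in `EReal` a `⊥` summand absorbs. -/
lemma biSup_add_le {ι : Type*} {s : Set ι} {f : ι → EReal} {c S : EReal}
    (h : ∀ i ∈ s, f i + c ≤ S) : (⨆ i ∈ s, f i) + c ≤ S := by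
  refine EReal.add_le_of_forall_lt fun a' ha c' hc => ?_
  simp only [lt_iSup_iff] at ha
  obtain ⟨i, hi, hlt⟩ := ha
  exact (add_le_add hlt.le hc.le).trans (h i hi)

lemma biSup_biSup_add {ι κ : Type*} (s : Set ι) (t : Set κ) (f : ι → EReal) (g : κ → EReal)
    (u v : EReal) :
    ⨆ i ∈ s, ⨆ j ∈ t, (g j + f i + u + v) = (u + ⨆ j ∈ t, g j) + (v + ⨆ i ∈ s, f i) := by
  apply le_antisymm
  · refine iSup₂_le fun i hi => iSup₂_le fun j hj => ?_
    calc g j + f i + u + v = (u + g j) + (v + f i) := by abel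
      _ ≤ _ := by
        gcongr
        · exact le_biSup g hj
        · exact le_biSup f hi
  · have e : (u + ⨆ j ∈ t, g j) + (v + ⨆ i ∈ s, f i)
        = (⨆ i ∈ s, f i) + ((⨆ j ∈ t, g j) + (u + v)) := by abel
    rw [e]
    refine biSup_add_le fun i hi => ?_
    rw [add_left_comm]
    refine biSup_add_le fun j hj => ?_
    refine le_trans (le_of_eq ?_)
      (le_iSup₂_of_le (f := fun i (_ : i ∈ s) => ⨆ j ∈ t, (g j + f i + u + v)) i hi
        (le_iSup₂_of_le (f := fun j (_ : j ∈ t) => g j + f i + u + v) j hj le_rfl))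
    abel

/-- Fenchel's equality over a restricted set: if `ξ ∈ ∂F(a)`, then `a` maximizes `⟪ξ, z⟫ - F z`. -/
lemma biSup_eq_of_mem_ediff {H : Type*} [NormedAddCommGroup H] [InnerProductSpace ℝ H]
    [CompleteSpace H] {F : H → EReal} (hF : ∀ z, F z ≠ ⊥) {s : Set H} (hs : s ⊆ edom F)
    {a ξ : H} (ha : a ∈ s) (hξ : ξ ∈ ediff F a) :
    ⨆ z ∈ s, ((⟪ξ, z⟫ - (F z).toReal : ℝ) : EReal) = ((⟪ξ, a⟫ - (F a).toReal : ℝ) : EReal) := by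
  refine le_antisymm (iSup₂_le fun z hz => ?_)
    (le_biSup (fun z => ((⟪ξ, z⟫ - (F z).toReal : ℝ) : EReal)) ha)
  have h := hξ z
  rw [← EReal.coe_toReal (hs hz) (hF z), ← EReal.coe_toReal (hs ha) (hF a)] at h
  norm_cast at h ⊢
  rw [inner_sub_right] at h
  linarith

/-- The uncentred error functional is at least its value at the saddle point; here `T` is
`K` for the primal error and `-K*` for the dual one, and `ξ` stands for `-T* b`. -/
lemma le_add_biSup {H H' : Type*} [NormedAddCommGroup H] [InnerProductSpace ℝ H]
    [NormedAddCommGroup H'] [InnerProductSpace ℝ H']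
    {F : H → EReal} {G : H' → EReal} {T : H → H'} {t : Set H'} {a ξ : H} {b : H'} {f : ℝ}
    (hf : F a = f) (hb : b ∈ t) (hξ : ξ ∈ ediff F a) (hT : ∀ z, ⟪ξ, z⟫ = -⟪T z, b⟫) (x : H) :
    ((f + (⟪T a, b⟫ - (G b).toReal) : ℝ) : EReal)
      ≤ F x + ⨆ z ∈ t, ((⟪T x, z⟫ - (G z).toReal : ℝ) : EReal) := by
  have h := hξ x
  rw [hf, inner_sub_right, hT, hT] at h
  refine le_trans (le_of_eq ?_) (add_le_add h
    (le_biSup (fun z => ((⟪T x, z⟫ - (G z).toReal : ℝ) : EReal)) hb))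
  norm_cast
  ring

/-- Nonnegativity of both errors and the gap identity. The sets are kept general so that one of
them can be specialized to a singleton. -/
lemma errors_nonneg_and_gap_eq
    {F : X → EReal} {G : Y → EReal} {K : X →L[ℝ] Y} (hF : ∀ x, F x ≠ ⊥) (hG : ∀ y, G y ≠ ⊥)
    {X₀ : Set X} {Y₀ : Set Y} (hX₀ : X₀ ⊆ edom F) (hY₀ : Y₀ ⊆ edom G)
    {xs : X} {ys : Y} (hsaddle : IsSaddle K F G xs ys) (hxs : xs ∈ X₀) (hys : ys ∈ Y₀)
    (x : X) (y : Y) :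
    0 ≤ epRestr K F G Y₀ xs x ∧ 0 ≤ edRestr K F G X₀ ys y ∧
      gap K F G X₀ Y₀ x y = epRestr K F G Y₀ xs x + edRestr K F G X₀ ys y := by
  obtain ⟨hxd, hyd, hsF, hsG⟩ := hsaddle
  have adj : ∀ (x : X) (y : Y), ⟪-(ContinuousLinearMap.adjoint K) y, x⟫ = -⟪K x, y⟫ := fun x y => by
    rw [inner_neg_left, ContinuousLinearMap.adjoint_inner_left, real_inner_comm]
  have hf : F xs = ((F xs).toReal : EReal) := (EReal.coe_toReal hxd (hF xs)).symm
  have hg : G ys = ((G ys).toReal : EReal) := (EReal.coe_toReal hyd (hG ys)).symm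
  have hP := le_add_biSup (G := G) (T := K) hf hys hsF (fun z => adj z ys) x
  have hD := le_add_biSup (G := F) (T := fun y => -(ContinuousLinearMap.adjoint K) y) hg hxs hsG
    (fun z => by rw [adj, neg_neg]) y
  have hgap : gap K F G X₀ Y₀ x y
      = (F x + ⨆ y' ∈ Y₀, ((⟪K x, y'⟫ - (G y').toReal : ℝ) : EReal))
        + (G y + ⨆ x' ∈ X₀,
          ((⟪-(ContinuousLinearMap.adjoint K) y, x'⟫ - (F x').toReal : ℝ) : EReal)) := by
    rw [gap, ← biSup_biSup_add]
    refine biSup_congr fun x' _ => biSup_congr fun y' _ => ?_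
    rw [adj, ← EReal.coe_add]
    congr 3
    ring
  rw [hgap, epRestr, edRestr, biSup_eq_of_mem_ediff hG hY₀ hys hsG,
    biSup_eq_of_mem_ediff hF hX₀ hxs hsF]
  generalize (F x + ⨆ y' ∈ Y₀, ((⟪K x, y'⟫ - (G y').toReal : ℝ) : EReal)) = A at *
  generalize (G y + ⨆ x' ∈ X₀,
    ((⟪-(ContinuousLinearMap.adjoint K) y, x'⟫ - (F x').toReal : ℝ) : EReal)) = B at *
  rw [hf, hg, ← EReal.coe_add, ← EReal.coe_add, EReal.toReal_coe, EReal.toReal_coe]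
  refine ⟨?_, ?_, ?_⟩
  · rwa [EReal.sub_nonneg (.inr (EReal.coe_ne_top _)) (.inr (EReal.coe_ne_bot _))]
  · rwa [EReal.sub_nonneg (.inr (EReal.coe_ne_top _)) (.inr (EReal.coe_ne_bot _))]
  · rw [sub_eq_add_neg A, sub_eq_add_neg B, add_add_add_comm, ← EReal.coe_neg, ← EReal.coe_neg,
      ← EReal.coe_add, adj]
    -- The two constants cancel.
    have h0 : -((F xs).toReal + (⟪K xs, ys⟫ - (G ys).toReal))
        + -((G ys).toReal + (-⟪K xs, ys⟫ - (F xs).toReal)) = 0 := by ring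
    rw [h0, EReal.coe_zero, add_zero]

/-- Proposition: properties of restricted gap and error functionals. -/
theorem statement0
    (F : X → EReal) (G : Y → EReal) (K : X →L[ℝ] Y)
    (hFp : Proper F) (hFc : ConvexE F) (hFl : LowerSemicontinuous F)
    (hGp : Proper G) (hGc : ConvexE G) (hGl : LowerSemicontinuous G)
    (X₀ : Set X) (Y₀ : Set Y) (hX₀ : X₀ ⊆ edom F) (hY₀ : Y₀ ⊆ edom G)
    (xs : X) (ys : Y) (hsaddle : IsSaddle K F G xs ys)
    (hxs : xs ∈ X₀) (hys : ys ∈ Y₀) :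
    ∀ x : X, ∀ y : Y,
      0 ≤ gap K F G X₀ Y₀ x y ∧
      0 ≤ epRestr K F G Y₀ xs x ∧
      0 ≤ edRestr K F G X₀ ys y ∧
      gap K F G X₀ Y₀ x y = epRestr K F G Y₀ xs x + edRestr K F G X₀ ys y ∧
      epRestr K F G Y₀ xs x ≤ gap K F G {xs} Y₀ x y ∧
      edRestr K F G X₀ ys y ≤ gap K F G X₀ {ys} x y := by
  intro x y
  have hX₁ : {xs} ⊆ edom F := Set.singleton_subset_iff.2 (hX₀ hxs)
  have hY₁ : {ys} ⊆ edom G := Set.singleton_subset_iff.2 (hY₀ hys)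
  obtain ⟨hp, hd, h⟩ := errors_nonneg_and_gap_eq hFp.1 hGp.1 hX₀ hY₀ hsaddle hxs hys x y
  obtain ⟨-, hd', h'⟩ := errors_nonneg_and_gap_eq hFp.1 hGp.1 hX₁ hY₀ hsaddle
    (Set.mem_singleton xs) hys x y
  obtain ⟨hp', -, h''⟩ := errors_nonneg_and_gap_eq hFp.1 hGp.1 hX₀ hY₁ hsaddle hxs
    (Set.mem_singleton ys) x y
  refine ⟨h ▸ add_nonneg hp hd, hp, hd, h, ?_, ?_⟩
  · rw [h']
    exact le_add_of_nonneg_right hd'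
  · rw [h'']
    exact le_add_of_nonneg_left hp'

end
end

section
/- Suppose a saddle point (x*, y*) exists and F is strongly coercive, i.e. F(x)/‖x‖ → ∞ as ‖x‖ → ∞. Then for each bounded set Y₀ ⊆ dom G there exists a bounded set X₀ ⊆ dom F such that the full dual error coincides with the restricted one on Y₀, that is, 𝔈^d(y) = 𝔈^d_{X₀}(y) for all y ∈ Y₀. -/
/-! Strong coercivity makes the Fenchel conjugate of `F` locally a supremum over a ball.
If `‖v‖ ≤ M` and `‖x‖` is large, then `⟪v, x⟫ - F x ≤ M ‖x‖ - (M + 1) ‖x‖ = -‖x‖`, which drops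
below `-M ‖xs‖ - F xs ≤ ⟪v, xs⟫ - F xs`. Hence points outside a ball whose radius depends only on
`M` never beat the fixed point `xs` of the domain (`conj_eq_restricted`). Since `K*` is bounded,
a single `M` serves all `-K*y` with `y ∈ Y₀` and also `-K*ys`, so both suprema occurring in the
dual error may be restricted to the same bounded subset of the domain. -/

open scoped RealInnerProductSpace
open Filter

noncomputable section

variable {X Y : Type*} [NormedAddCommGroup X] [InnerProductSpace ℝ X] [CompleteSpace X]
  [NormedAddCommGroup Y] [InnerProductSpace ℝ Y] [CompleteSpace Y]

/-- The full dual error functional `𝔈^d(y) = G(y) + F*(-K*y) - [G(ys) + F*(-K*ys)]`. -/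
def edFull (K : X →L[ℝ] Y) (F : X → EReal) (G : Y → EReal) (ys : Y) (y : Y) : EReal :=
  (G y + ⨆ x' : X, (((⟪-(ContinuousLinearMap.adjoint K) y, x'⟫ : ℝ) : EReal) - F x'))
    - (G ys + ⨆ x' : X, (((⟪-(ContinuousLinearMap.adjoint K) ys, x'⟫ : ℝ) : EReal) - F x'))

/-- For a strongly coercive `F`, one bounded subset of the domain computes the conjugate of `F`
at all `v` with `‖v‖ ≤ M`. -/
theorem conj_eq_restricted {X : Type*} [NormedAddCommGroup X] [InnerProductSpace ℝ X]
    (F : X → EReal) (hbot : ∀ x, F x ≠ ⊥) (xs : X) (hxs : F xs ≠ ⊤)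
    (hcoercive : ∀ C : ℝ, ∃ R : ℝ, ∀ x : X, R ≤ ‖x‖ → ((C * ‖x‖ : ℝ) : EReal) ≤ F x) (M : ℝ) :
    ∃ X₀ : Set X, X₀ ⊆ edom F ∧ Bornology.IsBounded X₀ ∧ ∀ v : X, ‖v‖ ≤ M →
      (⨆ x' : X, (((⟪v, x'⟫ : ℝ) : EReal) - F x')) =
        ⨆ x' ∈ X₀, ((⟪v, x'⟫ - (F x').toReal : ℝ) : EReal) := by
  obtain ⟨R, hR⟩ := hcoercive (M + 1)
  set R' : ℝ := max R (max ‖xs‖ (M * ‖xs‖ + (F xs).toReal)) with hR'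
  have h1 : R ≤ R' := le_max_left _ _
  have h2 : ‖xs‖ ≤ R' := (le_max_left _ _).trans (le_max_right _ _)
  have h3 : M * ‖xs‖ + (F xs).toReal ≤ R' := (le_max_right _ _).trans (le_max_right _ _)
  have hval : ∀ v x : X, F x ≠ ⊤ →
      ((⟪v, x⟫ : ℝ) : EReal) - F x = ((⟪v, x⟫ - (F x).toReal : ℝ) : EReal) := by
    intro v x hx
    rw [EReal.coe_sub, EReal.coe_toReal hx (hbot x)]
  refine ⟨{x | x ∈ edom F ∧ ‖x‖ ≤ R'}, fun x hx => hx.1, ?_, ?_⟩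
  · exact (Metric.isBounded_closedBall (x := (0 : X)) (r := R')).subset
      fun x hx => mem_closedBall_zero_iff.2 hx.2
  intro v hv
  apply le_antisymm
  · refine iSup_le fun x => ?_
    by_cases hx : F x = ⊤
    · rw [hx, EReal.sub_top]
      exact bot_le
    rw [hval v x hx]
    by_cases hxR : ‖x‖ ≤ R'
    · exact le_iSup₂_of_le x ⟨hx, hxR⟩ le_rfl
    -- Outside the ball the value at `x` is dominated by the value at `xs`.
    refine le_iSup₂_of_le xs ⟨hxs, h2⟩ (EReal.coe_le_coe_iff.2 ?_)
    push Not at hxR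
    have hF := hR x (h1.trans hxR.le)
    rw [← EReal.coe_toReal hx (hbot x), EReal.coe_le_coe_iff] at hF
    have hi : ⟪v, x⟫ ≤ M * ‖x‖ :=
      (real_inner_le_norm v x).trans (mul_le_mul_of_nonneg_right hv (norm_nonneg x))
    have hi' : -(M * ‖xs‖) ≤ ⟪v, xs⟫ :=
      (neg_le_neg (mul_le_mul_of_nonneg_right hv (norm_nonneg xs))).trans
        (neg_le_of_abs_le (abs_real_inner_le_norm v xs))
    linarith
  · refine iSup₂_le fun x hx => ?_
    rw [← hval v x hx.1]
    exact le_iSup (fun x' : X => ((⟪v, x'⟫ : ℝ) : EReal) - F x') x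

/-- Lemma: strongly coercive `F` lets the full dual error coincide with a
restricted one on bounded sets. -/
theorem statement1
    (F : X → EReal) (G : Y → EReal) (K : X →L[ℝ] Y)
    (hFp : Proper F) (hFc : ConvexE F) (hFl : LowerSemicontinuous F)
    (hGp : Proper G) (hGc : ConvexE G) (hGl : LowerSemicontinuous G)
    (xs : X) (ys : Y) (hsaddle : IsSaddle K F G xs ys)
    (hcoercive : ∀ C : ℝ, ∃ R : ℝ, ∀ x : X, R ≤ ‖x‖ → ((C * ‖x‖ : ℝ) : EReal) ≤ F x) :
    ∀ Y₀ : Set Y, Y₀ ⊆ edom G → Bornology.IsBounded Y₀ →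
      ∃ X₀ : Set X, X₀ ⊆ edom F ∧ Bornology.IsBounded X₀ ∧
        ∀ y ∈ Y₀, edFull K F G ys y = edRestr K F G X₀ ys y := by
  intro Y₀ _ hb
  obtain ⟨B, hB⟩ := (hb.insert ys).exists_norm_le
  obtain ⟨X₀, hX, hXb, h⟩ := conj_eq_restricted F hFp.1 xs hsaddle.1 hcoercive
    (‖ContinuousLinearMap.adjoint K‖ * B)
  have key : ∀ y ∈ insert ys Y₀,
      ‖-(ContinuousLinearMap.adjoint K) y‖ ≤ ‖ContinuousLinearMap.adjoint K‖ * B := by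
    intro y hy
    rw [norm_neg]
    exact (ContinuousLinearMap.adjoint K).le_opNorm_of_le (hB y hy)
  refine ⟨X₀, hX, hXb, fun y hy => ?_⟩
  unfold edFull edRestr
  rw [h _ (key y (Set.mem_insert_of_mem _ hy)), h _ (key ys (Set.mem_insert _ _))]

end
end

section
/- Let (xᵏ, yᵏ, x̄ᵏ, ȳᵏ) be a Douglas–Rachford iteration with step sizes σ, τ > 0. Then for every k ≥ 0 and every (x, y) ∈ dom F × dom G: L(xᵏ⁺¹, y) − L(x, yᵏ⁺¹) ≤ (1/σ)(‖x̄ᵏ − x + σK*y‖²/2 − ‖x̄ᵏ⁺¹ − x + σK*y‖²/2 − ‖x̄ᵏ − x̄ᵏ⁺¹‖²/2) + (1/τ)(‖ȳᵏ − y − τKx‖²/2 − ‖ȳᵏ⁺¹ − y − τKx‖²/2 − ‖ȳᵏ − ȳᵏ⁺¹‖²/2). -/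
/-!
The subgradient inclusions bound `F (u (k+1)) - F x` and `G (v (k+1)) - G y` by inner products
(`toReal_sub_le_of_mem_ediff`), and each bracket on the right-hand side is an inner product of the
form `⟪a - b, b⟫` (`polarization_step`). With `d = ub k - ub (k+1)` and `e = vb k - vb (k+1)`, the
update rules read `ub (k+1) = u (k+1) - σ K* (v (k+1) - e)` and
`vb (k+1) = v (k+1) + τ K (u (k+1) - d)`. Substituting them turns the bound obtained from the
subgradients into exactly the right-hand side (`lagrangian_identity`), so the subgradient
inequalities are the only place where equality is lost.
-/

open scoped RealInnerProductSpace
open Filter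

noncomputable section

variable {X Y : Type*} [NormedAddCommGroup X] [InnerProductSpace ℝ X] [CompleteSpace X]
  [NormedAddCommGroup Y] [InnerProductSpace ℝ Y] [CompleteSpace Y]

/-- The Lagrangian, as a real number (meaningful on `edom F × edom G`). -/
def lagr (K : X →L[ℝ] Y) (F : X → EReal) (G : Y → EReal) (x : X) (y : Y) : ℝ :=
  ⟪K x, y⟫ + (F x).toReal - (G y).toReal

/-- The Douglas--Rachford iteration for the saddle-point problem. -/
def IsDR (K : X →L[ℝ] Y) (F : X → EReal) (G : Y → EReal) (σ τ : ℝ)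
    (u : ℕ → X) (v : ℕ → Y) (ub : ℕ → X) (vb : ℕ → Y) : Prop :=
  ∀ k : ℕ,
    σ⁻¹ • (ub k - u (k+1)) ∈ ediff F (u (k+1)) ∧
    τ⁻¹ • (vb k - v (k+1)) ∈ ediff G (v (k+1)) ∧
    ub (k+1) = u (k+1) - σ • (ContinuousLinearMap.adjoint K) (v (k+1) + vb (k+1) - vb k) ∧
    vb (k+1) = v (k+1) + τ • K (u (k+1) + ub (k+1) - ub k)

/-- The subgradient inequality between real values. The point `p` lies in the effective domain
because `x` does and a subgradient exists at `p`. -/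
theorem toReal_sub_le_of_mem_ediff {H : Type*} [NormedAddCommGroup H] [InnerProductSpace ℝ H]
    {F : H → EReal} (hF : Proper F) {p ξ x : H} (hξ : ξ ∈ ediff F p) (hx : x ∈ edom F) :
    (F p).toReal - (F x).toReal ≤ ⟪ξ, p - x⟫ := by
  have h := hξ x
  have hx' : F x ≠ ⊤ := hx
  have hp : F p ≠ ⊤ := by
    intro hp
    rw [hp, EReal.top_add_coe] at h
    exact hx' (top_le_iff.mp h)
  rw [← EReal.coe_toReal hp (hF.1 p), ← EReal.coe_toReal hx' (hF.1 x)] at h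
  have h' : (F p).toReal + ⟪ξ, x - p⟫ ≤ (F x).toReal := by exact_mod_cast h
  rw [← neg_sub p x, inner_neg_right] at h'
  linarith

theorem polarization_step {H : Type*} [NormedAddCommGroup H] [InnerProductSpace ℝ H]
    (a b : H) : ‖a‖ ^ 2 / 2 - ‖b‖ ^ 2 / 2 - ‖a - b‖ ^ 2 / 2 = ⟪a - b, b⟫ := by
  rw [norm_sub_sq_real, inner_sub_left, real_inner_self_eq_norm_sq]
  ring

/-- The algebraic identity behind the estimate: `p`, `q` stand for the proximal points, `a`, `b`
for the updated points, and `d`, `e` for the decrements, so that `a + d`, `b + e` are the points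
before the update. -/
theorem lagrangian_identity (K : X →L[ℝ] Y) {σ τ : ℝ} (hσ : σ ≠ 0) (hτ : τ ≠ 0)
    (x p a d : X) (y q b e : Y)
    (ha : a = p - σ • (ContinuousLinearMap.adjoint K) (q - e))
    (hb : b = q + τ • K (p - d)) :
    ⟪K p, y⟫ - ⟪K x, q⟫ + ⟪σ⁻¹ • (a + d - p), p - x⟫ + ⟪τ⁻¹ • (b + e - q), q - y⟫ =
      σ⁻¹ * ⟪d, a - x + σ • (ContinuousLinearMap.adjoint K) y⟫
        + τ⁻¹ * ⟪e, b - y - τ • K x⟫ := by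
  subst ha hb
  simp only [map_sub, inner_add_left, inner_add_right, inner_sub_left, inner_sub_right,
    real_inner_smul_left, real_inner_smul_right, smul_sub,
    ContinuousLinearMap.adjoint_inner_left, ContinuousLinearMap.adjoint_inner_right,
    real_inner_comm (K _) e, real_inner_comm (K _) q]
  field_simp
  ring

/-- Lemma: Lagrangian estimate for the basic Douglas--Rachford iteration. -/
theorem statement2
    (F : X → EReal) (G : Y → EReal) (K : X →L[ℝ] Y)
    (hFp : Proper F) (hFc : ConvexE F) (hFl : LowerSemicontinuous F)
    (hGp : Proper G) (hGc : ConvexE G) (hGl : LowerSemicontinuous G)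
    (σ τ : ℝ) (hσ : 0 < σ) (hτ : 0 < τ)
    (u : ℕ → X) (v : ℕ → Y) (ub : ℕ → X) (vb : ℕ → Y)
    (hDR : IsDR K F G σ τ u v ub vb) :
    ∀ k : ℕ, ∀ x ∈ edom F, ∀ y ∈ edom G,
      lagr K F G (u (k+1)) y - lagr K F G x (v (k+1)) ≤
        σ⁻¹ * (‖ub k - x + σ • (ContinuousLinearMap.adjoint K) y‖ ^ 2 / 2
          - ‖ub (k+1) - x + σ • (ContinuousLinearMap.adjoint K) y‖ ^ 2 / 2
          - ‖ub k - ub (k+1)‖ ^ 2 / 2)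
        + τ⁻¹ * (‖vb k - y - τ • K x‖ ^ 2 / 2
          - ‖vb (k+1) - y - τ • K x‖ ^ 2 / 2
          - ‖vb k - vb (k+1)‖ ^ 2 / 2) := by
  intro k x hx y hy
  obtain ⟨hu, hv, hub, hvb⟩ := hDR k
  have h1 := toReal_sub_le_of_mem_ediff hFp hu hx
  have h2 := toReal_sub_le_of_mem_ediff hGp hv hy
  have key := lagrangian_identity K hσ.ne' hτ.ne' x (u (k+1)) (ub (k+1)) (ub k - ub (k+1))
    y (v (k+1)) (vb (k+1)) (vb k - vb (k+1))
    (by rw [sub_sub_eq_add_sub]; exact hub) (by rw [sub_sub_eq_add_sub]; exact hvb)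
  rw [add_sub_cancel, add_sub_cancel] at key
  have h3 := polarization_step (ub k - x + σ • (ContinuousLinearMap.adjoint K) y)
    (ub (k+1) - x + σ • (ContinuousLinearMap.adjoint K) y)
  have h4 := polarization_step (vb k - y - τ • K x) (vb (k+1) - y - τ • K x)
  rw [add_sub_add_right_eq_sub, sub_sub_sub_cancel_right] at h3
  rw [sub_sub_sub_cancel_right, sub_sub_sub_cancel_right] at h4
  rw [h3, h4, ← key]
  unfold lagr
  linarith

end
end

section
/- Let (xᵏ, yᵏ, x̄ᵏ, ȳᵏ) be a Douglas–Rachford iteration with step sizes σ, τ > 0. If along a subsequence (kᵢ) the pairs (x̄^{kᵢ}, ȳ^{kᵢ}) converge weakly to some (x̄*, ȳ*) and (x̄^{kᵢ} − x̄^{kᵢ+1}, ȳ^{kᵢ} − ȳ^{kᵢ+1}) converge to (0,0) in norm, then (x^{kᵢ+1}, y^{kᵢ+1}, x̄^{kᵢ+1}, ȳ^{kᵢ+1}) converges weakly to (x*, y*, x̄*, ȳ*), where (x*, y*) is the unique solution of the linear system x* − σK*y* = x̄*, y* + τKx* = ȳ*, and moreover (x*, y*) is a saddle point. -/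
/-! The recursion reads `p - σK*q = ub (k+1) - σK*ε` and `q + τKp = vb (k+1) + τKδ`, where
`p = u (k+1)`, `q = v (k+1)`, and `δ = ub k - ub (k+1)`, `ε = vb k - vb (k+1)` tend to `0` along
the subsequence. Eliminating `q` turns the linear system into `(1 + στK*K) p = x̄ + σK*ȳ`; this
operator is symmetric and, by Lax–Milgram, onto (`surjective_one_add_adjoint_comp`), so the system
is uniquely solvable and its solution depends weakly continuously on the right-hand side.

For the saddle point property, add the two subgradient inequalities of the iteration, tested
at `x` and `y`. The skew terms combine to `⟪Kp, y⟫ - ⟪q, Kx⟫`, which is linear in `(p, q)` and hence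
weakly continuous, while the remaining terms pair a norm-null sequence with a weakly convergent,
hence bounded, one (`WeakTendsto.inner_null`). Since `F` and `G` are weakly lower semicontinuous
(`eventually_lt_of_weakTendsto`), the limit inequality is
`F x* + G y* + ⟪Kx*, y⟫ - ⟪y*, Kx⟫ ≤ F x + G y`, from which both inclusions follow
(`isSaddle_of_forall_real`). -/

open scoped RealInnerProductSpace
open Filter

noncomputable section

variable {X Y : Type*} [NormedAddCommGroup X] [InnerProductSpace ℝ X] [CompleteSpace X]
  [NormedAddCommGroup Y] [InnerProductSpace ℝ Y] [CompleteSpace Y]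

/-- Weak convergence in a Hilbert space. -/
def WeakTendsto (u : ℕ → X) (z : X) : Prop :=
  ∀ w : X, Tendsto (fun k => ⟪u k, w⟫) atTop (nhds ⟪z, w⟫)

/-- The bilinear form `⟪x, z⟫ + c ⟪Kx, Kz⟫` is coercive, so Lax–Milgram applies. -/
theorem surjective_one_add_adjoint_comp {X Y : Type*} [NormedAddCommGroup X]
    [InnerProductSpace ℝ X] [CompleteSpace X] [NormedAddCommGroup Y] [InnerProductSpace ℝ Y]
    [CompleteSpace Y] (K : X →L[ℝ] Y) {c : ℝ} (hc : 0 ≤ c) (w : X) :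
    ∃ x : X, x + c • ContinuousLinearMap.adjoint K (K x) = w := by
  let T : X →L[ℝ] X := ContinuousLinearMap.id ℝ X + c • (ContinuousLinearMap.adjoint K ∘L K)
  let B : X →L[ℝ] X →L[ℝ] ℝ := (innerSL ℝ : X →L[ℝ] X →L[ℝ] ℝ) ∘L T
  have hB : ∀ x z, B x z = ⟪T x, z⟫ := fun x z => rfl
  have hT : ∀ x, T x = x + c • ContinuousLinearMap.adjoint K (K x) := fun x => rfl
  have hco : IsCoercive B := by
    refine ⟨1, one_pos, fun x => ?_⟩
    rw [hB, hT, inner_add_left, real_inner_smul_left, ContinuousLinearMap.adjoint_inner_left,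
      real_inner_self_eq_norm_mul_norm, real_inner_self_eq_norm_mul_norm]
    nlinarith [mul_nonneg hc (mul_self_nonneg ‖K x‖)]
  refine ⟨hco.continuousLinearEquivOfBilin.symm w, ?_⟩
  rw [← hT]
  refine ext_inner_right ℝ fun z => ?_
  rw [← hB, ← hco.continuousLinearEquivOfBilin_apply, ContinuousLinearEquiv.apply_symm_apply]

/-- Weakly convergent sequences are bounded (uniform boundedness principle), so their inner
products with a norm-null sequence tend to `0`. -/
theorem WeakTendsto.inner_null {X : Type*} [NormedAddCommGroup X] [InnerProductSpace ℝ X]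
    [CompleteSpace X] {p a : ℕ → X} {z : X} (hp : WeakTendsto p z)
    (ha : Tendsto a atTop (nhds 0)) : Tendsto (fun i => ⟪a i, p i⟫) atTop (nhds 0) := by
  obtain ⟨C, hC⟩ : ∃ C, ∀ i, ‖(innerSL ℝ (p i) : X →L[ℝ] ℝ)‖ ≤ C := by
    refine banach_steinhaus fun w => ?_
    obtain ⟨C, hC⟩ := (hp w).norm.bddAbove_range
    exact ⟨C, fun i => hC ⟨i, rfl⟩⟩
  simp only [innerSL_apply_norm] at hC
  have h0 : Tendsto (fun i => ‖a i‖ * C) atTop (nhds 0) := by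
    simpa using ha.norm.mul_const C
  refine squeeze_zero_norm (fun i => ?_) h0
  exact (norm_inner_le_norm _ _).trans (mul_le_mul_of_nonneg_left (hC i) (norm_nonneg _))

/-- Norm-null perturbations do not affect weak limits. -/
theorem WeakTendsto.add_null {X : Type*} [NormedAddCommGroup X] [InnerProductSpace ℝ X]
    [CompleteSpace X] {p a : ℕ → X} {z : X} (hp : WeakTendsto p z)
    (ha : Tendsto a atTop (nhds 0)) : WeakTendsto (fun i => p i + a i) z := fun w => by
  have h := (hp w).add (ha.inner (tendsto_const_nhds (x := w)))
  simpa [inner_add_left] using h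

/-- A proper convex lower semicontinuous functional is weakly sequentially lower semicontinuous:
a functional separating the limit from the closed convex sublevel set `{F ≤ c}` eventually separates
the sequence from it as well. -/
theorem eventually_lt_of_weakTendsto {X : Type*} [NormedAddCommGroup X] [InnerProductSpace ℝ X]
    [CompleteSpace X] {F : X → EReal} (hFp : Proper F) (hFc : ConvexE F)
    (hFl : LowerSemicontinuous F) {p : ℕ → X} {z : X} (hp : WeakTendsto p z) {c : ℝ}
    (hc : (c : EReal) < F z) : ∀ᶠ i in atTop, (c : EReal) < F (p i) := by
  have hconv : Convex ℝ {x | F x ≤ (c : EReal)} := by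
    intro x hx y hy s t hs ht hst
    obtain rfl : t = 1 - s := by linarith
    have hxt : F x ≠ ⊤ := ne_top_of_le_ne_top (EReal.coe_ne_top c) hx
    have hyt : F y ≠ ⊤ := ne_top_of_le_ne_top (EReal.coe_ne_top c) hy
    have h := hFc x y s hs (by linarith)
    simp only [Set.mem_ofPred_eq] at hx hy ⊢
    rw [← EReal.coe_toReal hxt (hFp.1 x)] at hx h
    rw [← EReal.coe_toReal hyt (hFp.1 y)] at hy h
    refine h.trans ?_
    rw [EReal.coe_le_coe_iff] at hx hy
    rw [← EReal.coe_mul, ← EReal.coe_mul, ← EReal.coe_add, EReal.coe_le_coe_iff]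
    nlinarith [mul_le_mul_of_nonneg_left hx hs, mul_le_mul_of_nonneg_left hy ht]
  have hcl : IsClosed {x | F x ≤ (c : EReal)} := hFl.isClosed_preimage c
  obtain ⟨f, s, hs, hfz⟩ := geometric_hahn_banach_closed_point hconv hcl
    (x := z) (by simpa using hc)
  have hf : ∀ x, f x = ⟪x, (InnerProductSpace.toDual ℝ X).symm f⟫ := fun x => by
    rw [real_inner_comm, InnerProductSpace.toDual_symm_apply]
  have hlim := hp ((InnerProductSpace.toDual ℝ X).symm f)
  rw [hf] at hfz
  filter_upwards [hlim.eventually_const_lt hfz] with i hi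
  rw [← hf] at hi
  by_contra hle
  exact absurd (hs _ (not_lt.mp hle)) (not_lt.mpr hi.le)

theorem le_of_forall_real_lt {A : EReal} {r : ℝ} (h : ∀ a : ℝ, (a : EReal) < A → a ≤ r) :
    A ≤ (r : EReal) := by
  refine le_of_forall_lt fun b hb => ?_
  obtain ⟨a, hba, haA⟩ := EReal.lt_iff_exists_real_btwn.mp hb
  exact hba.trans_le (EReal.coe_le_coe_iff.mpr (h a haA))

/-- The summed subgradient inequality characterizes saddle points. Real minorants `a`, `b` stand for
the extended values `F xs`, `G ys`, whose finiteness is part of the conclusion. -/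
theorem isSaddle_of_forall_real {X Y : Type*} [NormedAddCommGroup X]
    [InnerProductSpace ℝ X] [CompleteSpace X] [NormedAddCommGroup Y] [InnerProductSpace ℝ Y]
    [CompleteSpace Y] {K : X →L[ℝ] Y} {F : X → EReal} {G : Y → EReal}
    (hFp : Proper F) (hGp : Proper G) {xs : X} {ys : Y}
    (h : ∀ (x : X) (y : Y) (r s a b : ℝ), F x = r → G y = s → (a : EReal) < F xs →
      (b : EReal) < G ys → a + b + (⟪K xs, y⟫ - ⟪ys, K x⟫) ≤ r + s) :
    IsSaddle K F G xs ys := by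
  obtain ⟨x₀, hx₀⟩ := hFp.2
  obtain ⟨y₀, hy₀⟩ := hGp.2
  have fin : ∀ {t : EReal}, t ≠ ⊤ → t ≠ ⊥ → ∃ r : ℝ, t = r :=
    fun h₁ h₂ => ⟨_, (EReal.coe_toReal h₁ h₂).symm⟩
  obtain ⟨r₀, hr₀⟩ := fin hx₀ (hFp.1 x₀)
  obtain ⟨s₀, hs₀⟩ := fin hy₀ (hGp.1 y₀)
  obtain ⟨a₀, -, ha₀⟩ := EReal.lt_iff_exists_real_btwn.mp (bot_lt_iff_ne_bot.mpr (hFp.1 xs))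
  obtain ⟨b₀, -, hb₀⟩ := EReal.lt_iff_exists_real_btwn.mp (bot_lt_iff_ne_bot.mpr (hGp.1 ys))
  have hFt : F xs ≠ ⊤ := by
    refine ne_top_of_le_ne_top (EReal.coe_ne_top _) (le_of_forall_real_lt
      (r := r₀ + s₀ - b₀ - (⟪K xs, y₀⟫ - ⟪ys, K x₀⟫)) fun a ha => ?_)
    linarith [h x₀ y₀ r₀ s₀ a b₀ hr₀ hs₀ ha hb₀]
  have hGt : G ys ≠ ⊤ := by
    refine ne_top_of_le_ne_top (EReal.coe_ne_top _) (le_of_forall_real_lt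
      (r := r₀ + s₀ - a₀ - (⟪K xs, y₀⟫ - ⟪ys, K x₀⟫)) fun b hb => ?_)
    linarith [h x₀ y₀ r₀ s₀ a₀ b hr₀ hs₀ ha₀ hb]
  obtain ⟨A, hA⟩ := fin hFt (hFp.1 xs)
  obtain ⟨B, hB⟩ := fin hGt (hGp.1 ys)
  have key : ∀ (x : X) (y : Y) (r s : ℝ), F x = r → G y = s →
      A + B + (⟪K xs, y⟫ - ⟪ys, K x⟫) ≤ r + s := by
    intro x y r s hr hs
    refine le_of_forall_pos_le_add fun ε hε => ?_
    have := h x y r s (A - ε / 2) (B - ε / 2) hr hs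
      (by rw [hA, EReal.coe_lt_coe_iff]; linarith) (by rw [hB, EReal.coe_lt_coe_iff]; linarith)
    linarith
  refine ⟨hFt, hGt, fun x => ?_, fun y => ?_⟩
  · by_cases hx : F x = ⊤
    · simp [hx]
    obtain ⟨r, hr⟩ := fin hx (hFp.1 x)
    rw [hA, hr, ← EReal.coe_add, EReal.coe_le_coe_iff, inner_neg_left,
      ContinuousLinearMap.adjoint_inner_left, map_sub, inner_sub_right]
    have h₁ := key x ys r B hr hB
    have h₂ := real_inner_comm ys (K xs)
    linarith
  · by_cases hy : G y = ⊤
    · simp [hy]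
    obtain ⟨s, hs⟩ := fin hy (hGp.1 y)
    rw [hB, hs, ← EReal.coe_add, EReal.coe_le_coe_iff, inner_sub_right]
    have h₁ := key xs y A s hA hs
    have h₂ := real_inner_comm ys (K xs)
    linarith

/-- Lemma: subsequential weak limits of the Douglas--Rachford iteration are
fixed points and yield saddle points. -/
theorem statement4
    (F : X → EReal) (G : Y → EReal) (K : X →L[ℝ] Y)
    (hFp : Proper F) (hFc : ConvexE F) (hFl : LowerSemicontinuous F)
    (hGp : Proper G) (hGc : ConvexE G) (hGl : LowerSemicontinuous G)
    (σ τ : ℝ) (hσ : 0 < σ) (hτ : 0 < τ)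
    (u : ℕ → X) (v : ℕ → Y) (ub : ℕ → X) (vb : ℕ → Y)
    (hDR : IsDR K F G σ τ u v ub vb)
    (k : ℕ → ℕ) (hk : StrictMono k) (xbs : X) (ybs : Y)
    (hwx : WeakTendsto (fun i => ub (k i)) xbs)
    (hwy : WeakTendsto (fun i => vb (k i)) ybs)
    (hdx : Tendsto (fun i => ub (k i) - ub (k i + 1)) atTop (nhds 0))
    (hdy : Tendsto (fun i => vb (k i) - vb (k i + 1)) atTop (nhds 0)) :
    ∃ xs : X, ∃ ys : Y,
      (xs - σ • (ContinuousLinearMap.adjoint K) ys = xbs ∧ ys + τ • K xs = ybs) ∧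
      (∀ xs' : X, ∀ ys' : Y,
        xs' - σ • (ContinuousLinearMap.adjoint K) ys' = xbs ∧ ys' + τ • K xs' = ybs →
          xs' = xs ∧ ys' = ys) ∧
      WeakTendsto (fun i => u (k i + 1)) xs ∧
      WeakTendsto (fun i => v (k i + 1)) ys ∧
      WeakTendsto (fun i => ub (k i + 1)) xbs ∧
      WeakTendsto (fun i => vb (k i + 1)) ybs ∧
      IsSaddle K F G xs ys := by
  set A := ContinuousLinearMap.adjoint K with hAdef
  have hA : ∀ y x, ⟪A y, x⟫ = ⟪y, K x⟫ := fun y x => ContinuousLinearMap.adjoint_inner_left K x y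
  have hστ : 0 ≤ σ * τ := (mul_pos hσ hτ).le
  have hsymm : ∀ x w, ⟪x, w + (σ * τ) • A (K w)⟫ = ⟪x + (σ * τ) • A (K x), w⟫ := by
    intro x w
    rw [inner_add_right, inner_add_left, real_inner_smul_right, real_inner_smul_left, hA,
      real_inner_comm (A (K w)) x, hA, real_inner_comm (K x)]
  -- Eliminating `y` from the linear system.
  have helim : ∀ x y a b, x - σ • A y = a → y + τ • K x = b →
      x + (σ * τ) • A (K x) = a + σ • A b := by
    rintro x y a b rfl rfl
    simp only [map_add, map_smul, smul_add, smul_smul]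
    abel
  obtain ⟨xs, hxs⟩ := surjective_one_add_adjoint_comp K hστ (xbs + σ • A ybs)
  obtain ⟨ys, hys⟩ : ∃ ys, ys = ybs - τ • K xs := ⟨_, rfl⟩
  have hsys₂ : ys + τ • K xs = ybs := by rw [hys]; abel
  have hsys₁ : xs - σ • A ys = xbs := by
    have : xbs = xs + (σ * τ) • A (K xs) - σ • A ybs := by rw [hxs]; abel
    rw [this, hys]
    simp only [map_sub, map_smul, smul_sub, smul_smul]
    abel
  have hbx : WeakTendsto (fun i => ub (k i + 1)) xbs := by
    have h := hwx.add_null (a := fun i => -(ub (k i) - ub (k i + 1)))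
      (by simpa only [neg_zero] using hdx.neg)
    simpa only [neg_sub, add_sub_cancel] using h
  have hby : WeakTendsto (fun i => vb (k i + 1)) ybs := by
    have h := hwy.add_null (a := fun i => -(vb (k i) - vb (k i + 1)))
      (by simpa only [neg_zero] using hdy.neg)
    simpa only [neg_sub, add_sub_cancel] using h
  set dx : ℕ → X := fun i => ub (k i) - ub (k i + 1) with hdxdef
  set dy : ℕ → Y := fun i => vb (k i) - vb (k i + 1) with hdydef
  have hub : ∀ i, ub (k i) = ub (k i + 1) + dx i := fun i => by simp [hdxdef]
  have hvb : ∀ i, vb (k i) = vb (k i + 1) + dy i := fun i => by simp [hdydef]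
  clear_value dx dy
  have hAdy : Tendsto (fun i => A (dy i)) atTop (nhds 0) := by
    exact (A.continuous.tendsto' 0 0 A.map_zero).comp hdy
  have hKdx : Tendsto (fun i => K (dx i)) atTop (nhds 0) := by
    exact (K.continuous.tendsto' 0 0 K.map_zero).comp hdx
  have e₁ : ∀ i, u (k i + 1) - σ • A (v (k i + 1)) = ub (k i + 1) + -(σ • A (dy i)) := by
    intro i
    rw [(hDR (k i)).2.2.1, hvb i, add_sub_assoc, sub_add_cancel_left, map_add, map_neg, smul_add,
      smul_neg]
    abel
  have e₂ : ∀ i, v (k i + 1) + τ • K (u (k i + 1)) = vb (k i + 1) + τ • K (dx i) := by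
    intro i
    rw [(hDR (k i)).2.2.2, hub i, add_sub_assoc, sub_add_cancel_left, map_add, map_neg, smul_add,
      smul_neg]
    abel
  have hr₁ : WeakTendsto (fun i => ub (k i + 1) + -(σ • A (dy i))) xbs :=
    hbx.add_null (by simpa using (hAdy.const_smul σ).neg)
  have hr₂ : WeakTendsto (fun i => vb (k i + 1) + τ • K (dx i)) ybs :=
    hby.add_null (by simpa using hKdx.const_smul τ)
  have hu : WeakTendsto (fun i => u (k i + 1)) xs := by
    -- Any test vector is `(1 + στK*K) w`, and the operator moves to the other side by symmetry.
    intro w'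
    obtain ⟨w, rfl⟩ := surjective_one_add_adjoint_comp K hστ w'
    have h := (hr₁ w).add ((hr₂ (K w)).const_mul σ)
    rw [hsymm, hxs, inner_add_left, real_inner_smul_left, hA]
    refine h.congr fun i => ?_
    beta_reduce
    rw [hsymm, helim _ _ _ _ (e₁ i) (e₂ i), inner_add_left _ (σ • A _), real_inner_smul_left, hA]
  have hK : ∀ x y, ⟪K x, y⟫ = ⟪x, A y⟫ := fun x y => by
    rw [real_inner_comm, ← hA, real_inner_comm]
  have hv : WeakTendsto (fun i => v (k i + 1)) ys := by
    intro w
    have h := (hr₂ w).sub ((hu (A w)).const_mul τ)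
    rw [hys, inner_sub_left, real_inner_smul_left, hK]
    refine h.congr fun i => ?_
    beta_reduce
    rw [← e₂ i, inner_add_left, real_inner_smul_left, hK]
    ring
  refine ⟨xs, ys, ⟨hsys₁, hsys₂⟩, ?_, hu, hv, hbx, hby, ?_⟩
  · rintro x y ⟨h₁, h₂⟩
    have hx : x = xs := by
      refine ext_inner_right ℝ fun w' => ?_
      obtain ⟨w, rfl⟩ := surjective_one_add_adjoint_comp K hστ w'
      rw [hsymm, hsymm, hxs, helim _ _ _ _ h₁ h₂]
    refine ⟨hx, ?_⟩
    rw [hys, ← h₂, hx]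
    abel
  refine isSaddle_of_forall_real hFp hGp fun x y r s a b hr hs ha hb => ?_
  have hex : Tendsto (fun i => σ⁻¹ • dx i + A (dy i)) atTop (nhds 0) := by
    simpa using (hdx.const_smul σ⁻¹).add hAdy
  have hey : Tendsto (fun i => τ⁻¹ • dy i - K (dx i)) atTop (nhds 0) := by
    simpa using (hdy.const_smul τ⁻¹).sub hKdx
  have eξ : ∀ i, σ⁻¹ • (ub (k i) - u (k i + 1)) = σ⁻¹ • dx i + A (dy i) - A (v (k i + 1)) := by
    intro i
    have : ub (k i) - u (k i + 1) = dx i + σ • A (dy i) - σ • A (v (k i + 1)) := by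
      rw [hub i, eq_sub_of_add_eq (e₁ i).symm]
      abel
    rw [this, smul_sub, smul_add, inv_smul_smul₀ hσ.ne', inv_smul_smul₀ hσ.ne']
  have eη : ∀ i, τ⁻¹ • (vb (k i) - v (k i + 1)) = τ⁻¹ • dy i - K (dx i) + K (u (k i + 1)) := by
    intro i
    have : vb (k i) - v (k i + 1) = dy i - τ • K (dx i) + τ • K (u (k i + 1)) := by
      rw [hvb i, eq_sub_of_add_eq (e₂ i).symm]
      abel
    rw [this, smul_add, smul_sub, inv_smul_smul₀ hτ.ne', inv_smul_smul₀ hτ.ne']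
  have l₁ := (hex.inner (tendsto_const_nhds (x := x))).sub (hu.inner_null hex)
  have l₂ := (hey.inner (tendsto_const_nhds (x := y))).sub (hv.inner_null hey)
  have hlim := ((l₁.add l₂).add ((hu (A y)).sub (hv (K x)))).const_add (a + b)
  simp only [inner_zero_left, sub_zero, add_zero, zero_add, ← hK] at hlim
  refine le_of_tendsto hlim ?_
  filter_upwards [eventually_lt_of_weakTendsto hFp hFc hFl hu ha,
    eventually_lt_of_weakTendsto hGp hGc hGl hv hb] with i hai hbi
  have hF := (hDR (k i)).1 x
  have hG := (hDR (k i)).2.1 y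
  rw [eξ, hr] at hF
  rw [eη, hs] at hG
  have hF' := (add_le_add_left hai.le _).trans hF
  have hG' := (add_le_add_left hbi.le _).trans hG
  rw [← EReal.coe_add, EReal.coe_le_coe_iff, inner_sub_left, hA, map_sub K,
    inner_sub_right, inner_sub_right] at hF'
  rw [← EReal.coe_add, EReal.coe_le_coe_iff, inner_add_left, inner_sub_right,
    inner_sub_right] at hG'
  have hc := real_inner_comm (v (k i + 1)) (K (u (k i + 1)))
  linarith

end
end

section
/- Suppose a saddle point exists. Then any Douglas–Rachford iteration (xᵏ, yᵏ, x̄ᵏ, ȳᵏ) with step sizes σ, τ > 0 converges weakly to a point (x*, y*, x̄*, ȳ*) where (x*, y*) is a saddle point and x̄* = x* − σK*y*, ȳ* = y* + τKx*. -/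
/-!
The Douglas–Rachford iteration is a proximal-point-type iteration for the auxiliary variables
`(ub, vb)`, whose fixed points `(xs - σ K* ys, ys + τ K xs)` correspond to the saddle points.

* Monotonicity of `∂F` and `∂G` and skew-symmetry of the coupling `(x, y) ↦ (K* y, -K x)` show that
  the weighted distance `‖·‖²/σ + ‖·‖²/τ` of `(ub, vb)` to each fixed point decreases in each step
  by at least the weighted squared length of the increment (`descent`, `IsDR.wdist_succ_le`). Hence
  these distances converge, the increments tend to zero strongly, and all sequences are bounded.
* Weak cluster points are taken along ultrafilters: a bounded sequence has a weak limit along every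
  ultrafilter (`exists_weakTendstoAlong`). The subgradients produced by the iteration are
  `-K* v` and `K u` up to increments, so the sum of their pairings with the iterates tends to zero.
  This makes up for the lack of weak continuity of the inner product, and weak lower
  semicontinuity of `F` and `G` shows that cluster points are saddle points (`ediff_of_weak`,
  `IsDR.exists_cluster`).
* Since the distances to all fixed points converge, Opial's argument (`opial`) shows that the weak
  cluster point of `(ub, vb)` is unique, and it determines the saddle point (`fixed_inj`). Thus the
  limits along all ultrafilters finer than `atTop` agree, which is weak convergence.
-/


open scoped RealInnerProductSpace
open Filter

noncomputable section

variable {X Y : Type*} [NormedAddCommGroup X] [InnerProductSpace ℝ X] [CompleteSpace X]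
  [NormedAddCommGroup Y] [InnerProductSpace ℝ Y] [CompleteSpace Y]

/-! ### Weak convergence along ultrafilters -/

/-- Weak convergence along an arbitrary filter on the index set. Ultrafilters finer than `atTop`
play the role of subsequences below. -/
def WeakTendstoAlong (l : Filter ℕ) (u : ℕ → X) (z : X) : Prop :=
  ∀ w : X, Tendsto (fun k => ⟪u k, w⟫) l (nhds ⟪z, w⟫)

namespace WeakTendstoAlong

variable {l : Filter ℕ}

omit [CompleteSpace X] in
lemma of_tendsto {u : ℕ → X} {z : X} (h : Tendsto u l (nhds z)) : WeakTendstoAlong l u z :=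
  fun _ => h.inner tendsto_const_nhds

omit [CompleteSpace X] in
lemma add {u u' : ℕ → X} {z z' : X} (h : WeakTendstoAlong l u z) (h' : WeakTendstoAlong l u' z') :
    WeakTendstoAlong l (fun k => u k + u' k) (z + z') := fun w => by
  simpa only [inner_add_left] using (h w).add (h' w)

omit [CompleteSpace X] in
lemma sub {u u' : ℕ → X} {z z' : X} (h : WeakTendstoAlong l u z) (h' : WeakTendstoAlong l u' z') :
    WeakTendstoAlong l (fun k => u k - u' k) (z - z') := fun w => by
  simpa only [inner_sub_left] using (h w).sub (h' w)

omit [CompleteSpace X] in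
lemma smul {u : ℕ → X} {z : X} (c : ℝ) (h : WeakTendstoAlong l u z) :
    WeakTendstoAlong l (fun k => c • u k) (c • z) := fun w => by
  simpa only [real_inner_smul_left] using (h w).const_mul c

lemma map {u : ℕ → X} {z : X} (A : X →L[ℝ] Y) (h : WeakTendstoAlong l u z) :
    WeakTendstoAlong l (fun k => A (u k)) (A z) := fun w => by
  simpa only [ContinuousLinearMap.adjoint_inner_right] using h (ContinuousLinearMap.adjoint A w)

end WeakTendstoAlong

/-- Weak compactness of balls: a bounded sequence has a weak limit along every ultrafilter. The
limits of `⟪u k, w⟫` define a bounded linear functional of `w`, represented by a vector. -/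
lemma exists_weakTendstoAlong (U : Ultrafilter ℕ) (u : ℕ → X) (C : ℝ) (hu : ∀ k, ‖u k‖ ≤ C) :
    ∃ z, WeakTendstoAlong (U : Filter ℕ) u z := by
  have hb : ∀ k w, |⟪u k, w⟫| ≤ C * ‖w‖ := fun k w =>
    (abs_real_inner_le_norm _ _).trans (mul_le_mul_of_nonneg_right (hu k) (norm_nonneg _))
  have hex : ∀ w : X, ∃ r : ℝ, |r| ≤ C * ‖w‖ ∧
      Tendsto (fun k => ⟪u k, w⟫) (U : Filter ℕ) (nhds r) := by
    intro w
    obtain ⟨r, hr, hle⟩ := (isCompact_Icc (a := -(C * ‖w‖)) (b := C * ‖w‖)).ultrafilter_le_nhds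
      (U.map fun k => ⟪u k, w⟫) (by
        simp only [Ultrafilter.coe_map, le_principal_iff, mem_map]
        exact Filter.univ_mem' fun k => abs_le.mp (hb k w))
    exact ⟨r, abs_le.mpr hr, hle⟩
  choose φ hφ hlim using hex
  let f : X →ₗ[ℝ] ℝ :=
    { toFun := φ
      map_add' := fun a b => tendsto_nhds_unique (hlim (a + b)) (by
        simpa only [inner_add_right] using (hlim a).add (hlim b))
      map_smul' := fun c a => tendsto_nhds_unique (hlim (c • a)) (by
        simpa only [real_inner_smul_right, RingHom.id_apply, smul_eq_mul] using
          (hlim a).const_mul c) }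
  let g : StrongDual ℝ X := f.mkContinuous C hφ
  refine ⟨(InnerProductSpace.toDual ℝ X).symm g, fun w => ?_⟩
  rw [InnerProductSpace.toDual_symm_apply]
  exact hlim w

omit [CompleteSpace X] in
lemma tendsto_inner_zero {l : Filter ℕ} {d x : ℕ → X} {C : ℝ} (hd : Tendsto d l (nhds 0))
    (hx : ∀ k, ‖x k‖ ≤ C) : Tendsto (fun k => ⟪d k, x k⟫) l (nhds 0) := by
  refine squeeze_zero_norm (a := fun k => ‖d k‖ * C) (fun k => ?_) ?_
  · exact (norm_inner_le_norm _ _).trans (mul_le_mul_of_nonneg_left (hx k) (norm_nonneg _))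
  · simpa using hd.norm.mul_const C

/-! ### Subdifferentials -/

omit [CompleteSpace X] in
lemma ne_top_of_ediff {F : X → EReal} (hF : Proper F) {x ξ : X} (h : ξ ∈ ediff F x) :
    F x ≠ ⊤ := by
  obtain ⟨z, hz⟩ := hF.2
  intro hx
  have := h z
  rw [hx, EReal.top_add_coe, top_le_iff] at this
  exact hz this

omit [CompleteSpace X] in
lemma ediff_toReal {F : X → EReal} (hF : Proper F) {x ξ : X} (h : ξ ∈ ediff F x) (z : X)
    (hz : F z ≠ ⊤) : (F x).toReal + ⟪ξ, z - x⟫ ≤ (F z).toReal := by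
  have := h z
  rw [← EReal.coe_toReal (ne_top_of_ediff hF h) (hF.1 x), ← EReal.coe_toReal hz (hF.1 z)] at this
  exact_mod_cast this

omit [CompleteSpace X] in
/-- The subdifferential is a monotone operator. -/
lemma ediff_mono {F : X → EReal} (hF : Proper F) {x ξ x' ξ' : X} (h : ξ ∈ ediff F x)
    (h' : ξ' ∈ ediff F x') : 0 ≤ ⟪ξ - ξ', x - x'⟫ := by
  have h1 := ediff_toReal hF h x' (ne_top_of_ediff hF h')
  have h2 := ediff_toReal hF h' x (ne_top_of_ediff hF h)
  simp only [inner_sub_left, inner_sub_right] at *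
  linarith

omit [CompleteSpace X] in
/-- The proximal map is nonexpansive, by monotonicity of the subdifferential. -/
lemma prox_norm_le {F : X → EReal} (hF : Proper F) {σ : ℝ} (hσ : 0 < σ) {p x p' x' : X}
    (h : σ⁻¹ • (p - x) ∈ ediff F x) (h' : σ⁻¹ • (p' - x') ∈ ediff F x') :
    ‖x - x'‖ ≤ ‖p - p'‖ := by
  have h0 := ediff_mono hF h h'
  rw [← smul_sub, real_inner_smul_left] at h0
  have h1 : 0 ≤ ⟪p - x - (p' - x'), x - x'⟫ := nonneg_of_mul_nonneg_right h0 (inv_pos.mpr hσ)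
  have h2 : ⟪p - x - (p' - x'), x - x'⟫ = ⟪p - p', x - x'⟫ - ‖x - x'‖ ^ 2 := by
    rw [← real_inner_self_eq_norm_sq, ← inner_sub_left]
    congr 1
    abel
  have h3 := real_inner_le_norm (p - p') (x - x')
  have h4 := norm_nonneg (p - p')
  have h5 := norm_nonneg (x - x')
  by_contra! hlt
  nlinarith [h4, h5]

/-- A convex lower semicontinuous functional is weakly lower semicontinuous: its sublevel sets are
closed and convex, so a point outside is strictly separated from them by a continuous functional. -/
lemma eventually_lt_of_weak {F : X → EReal} (hFc : ConvexE F) (hFl : LowerSemicontinuous F)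
    {l : Filter ℕ} {x : ℕ → X} {x0 : X} (hx : WeakTendstoAlong l x x0) {a : ℝ}
    (ha : (a : EReal) < F x0) : ∀ᶠ k in l, (a : EReal) < F (x k) := by
  have hconv : Convex ℝ (F ⁻¹' Set.Iic (a : EReal)) := by
    intro y hy z hz s t hs ht hst
    obtain rfl : t = 1 - s := by linarith
    refine (hFc y z s hs (by linarith)).trans ?_
    calc (s : EReal) * F y + ((1 - s : ℝ) : EReal) * F z
        ≤ (s : EReal) * a + ((1 - s : ℝ) : EReal) * a :=
          add_le_add (mul_le_mul_of_nonneg_left hy (by exact_mod_cast hs))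
            (mul_le_mul_of_nonneg_left hz (by exact_mod_cast ht))
      _ = (a : EReal) := by
          norm_cast
          ring
  obtain ⟨f, s, hs, hs0⟩ := geometric_hahn_banach_closed_point hconv (hFl.isClosed_preimage _)
    (x := x0) (by simpa using ha)
  have hf : Tendsto (fun k => f (x k)) l (nhds (f x0)) := by
    have := hx ((InnerProductSpace.toDual ℝ X).symm f)
    simpa only [real_inner_comm ((InnerProductSpace.toDual ℝ X).symm f),
      InnerProductSpace.toDual_symm_apply] using this
  filter_upwards [hf.eventually (lt_mem_nhds hs0)] with k hk
  by_contra! hle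
  exact lt_asymm hk (hs _ hle)

/-- Closedness of the graph of `∂F × ∂G` under weak convergence, provided that the duality pairings
converge to the pairing of the limits. -/
lemma ediff_of_weak {F : X → EReal} {G : Y → EReal}
    (hFp : Proper F) (hFc : ConvexE F) (hFl : LowerSemicontinuous F)
    (hGp : Proper G) (hGc : ConvexE G) (hGl : LowerSemicontinuous G)
    {l : Filter ℕ} [l.NeBot] {x ξ : ℕ → X} {y η : ℕ → Y} {x0 ξ0 : X} {y0 η0 : Y}
    (hξ : ∀ k, ξ k ∈ ediff F (x k)) (hη : ∀ k, η k ∈ ediff G (y k))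
    (hx : WeakTendstoAlong l x x0) (hy : WeakTendstoAlong l y y0)
    (hξ0 : WeakTendstoAlong l ξ ξ0) (hη0 : WeakTendstoAlong l η η0)
    (hpair : Tendsto (fun k => ⟪ξ k, x k⟫ + ⟪η k, y k⟫) l (nhds (⟪ξ0, x0⟫ + ⟪η0, y0⟫))) :
    ξ0 ∈ ediff F x0 ∧ η0 ∈ ediff G y0 := by
  -- Adding both subgradient inequalities makes only the sum of the pairings appear.
  have key : ∀ (z : X) (w : Y), F z ≠ ⊤ → G w ≠ ⊤ → ∀ a b : ℝ, (a : EReal) < F x0 →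
      (b : EReal) < G y0 → a + b + ⟪ξ0, z - x0⟫ + ⟪η0, w - y0⟫ ≤ (F z).toReal + (G w).toReal := by
    intro z w hz hw a b ha hb
    have hlim : Tendsto (fun k => a + b + (⟪ξ k, z⟫ + ⟪η k, w⟫ - (⟪ξ k, x k⟫ + ⟪η k, y k⟫))) l
        (nhds (a + b + (⟪ξ0, z⟫ + ⟪η0, w⟫ - (⟪ξ0, x0⟫ + ⟪η0, y0⟫)))) :=
      (((hξ0 z).add (hη0 w)).sub hpair).const_add (a + b)
    have hle := le_of_tendsto (b := (F z).toReal + (G w).toReal) hlim (by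
      filter_upwards [eventually_lt_of_weak hFc hFl hx ha, eventually_lt_of_weak hGc hGl hy hb]
        with k hka hkb
      have h1 := ediff_toReal hFp (hξ k) z hz
      have h2 := ediff_toReal hGp (hη k) w hw
      rw [← EReal.coe_toReal (ne_top_of_ediff hFp (hξ k)) (hFp.1 _), EReal.coe_lt_coe_iff] at hka
      rw [← EReal.coe_toReal (ne_top_of_ediff hGp (hη k)) (hGp.1 _), EReal.coe_lt_coe_iff] at hkb
      rw [inner_sub_right] at h1 h2
      linarith)
    simp only [inner_sub_right]
    linarith
  obtain ⟨z1, hz1⟩ := hFp.2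
  obtain ⟨w1, hw1⟩ := hGp.2
  have hFx : F x0 ≠ ⊤ := by
    intro htop
    obtain ⟨b, -, hb⟩ := EReal.lt_iff_exists_real_btwn.mp (bot_lt_iff_ne_bot.mpr (hGp.1 y0))
    have := key z1 w1 hz1 hw1
      ((F z1).toReal + (G w1).toReal - b - ⟪ξ0, z1 - x0⟫ - ⟪η0, w1 - y0⟫ + 1) b
      (by rw [htop]; exact EReal.coe_lt_top _) hb
    linarith
  have hGy : G y0 ≠ ⊤ := by
    intro htop
    obtain ⟨a, -, ha⟩ := EReal.lt_iff_exists_real_btwn.mp (bot_lt_iff_ne_bot.mpr (hFp.1 x0))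
    have := key z1 w1 hz1 hw1 a
      ((F z1).toReal + (G w1).toReal - a - ⟪ξ0, z1 - x0⟫ - ⟪η0, w1 - y0⟫ + 1)
      ha (by rw [htop]; exact EReal.coe_lt_top _)
    linarith
  obtain ⟨f0, hf0⟩ : ∃ r : ℝ, F x0 = r := ⟨_, (EReal.coe_toReal hFx (hFp.1 _)).symm⟩
  obtain ⟨g0, hg0⟩ : ∃ r : ℝ, G y0 = r := ⟨_, (EReal.coe_toReal hGy (hGp.1 _)).symm⟩
  have key2 : ∀ (z : X) (w : Y), F z ≠ ⊤ → G w ≠ ⊤ →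
      f0 + g0 + ⟪ξ0, z - x0⟫ + ⟪η0, w - y0⟫ ≤ (F z).toReal + (G w).toReal := by
    intro z w hz hw
    refine le_of_forall_pos_sub_le fun ε hε => ?_
    have := key z w hz hw (f0 - ε / 2) (g0 - ε / 2)
      (by rw [hf0, EReal.coe_lt_coe_iff]; linarith) (by rw [hg0, EReal.coe_lt_coe_iff]; linarith)
    linarith
  constructor
  · intro z
    by_cases hz : F z = ⊤
    · rw [hz]; exact le_top
    have := key2 z y0 hz hGy
    rw [hg0, EReal.toReal_coe, sub_self, inner_zero_right] at this
    rw [hf0, ← EReal.coe_toReal hz (hFp.1 z)]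
    exact_mod_cast (by linarith : f0 + ⟪ξ0, z - x0⟫ ≤ (F z).toReal)
  · intro w
    by_cases hw : G w = ⊤
    · rw [hw]; exact le_top
    have := key2 x0 w hFx hw
    rw [hf0, EReal.toReal_coe, sub_self, inner_zero_right] at this
    rw [hg0, ← EReal.coe_toReal hw (hGp.1 w)]
    exact_mod_cast (by linarith : g0 + ⟪η0, w - y0⟫ ≤ (G w).toReal)

/-! ### Descent inequality and uniqueness of weak cluster points -/

/-- One step of the iteration, written for the differences to a fixed point: `x`, `y` are the
proximal points, `P`, `Q` the new auxiliary variables and `P - dp`, `Q - dq` the old ones. The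
hypothesis `h` is monotonicity of `∂F × ∂G`, the conclusion Fejér monotonicity with a gain. -/
lemma descent (K : X →L[ℝ] Y) {σ τ : ℝ} (hσ : 0 < σ) (hτ : 0 < τ) (x dp P : X) (y dq Q : Y)
    (hP : P = x - σ • (ContinuousLinearMap.adjoint K) (y + dq)) (hQ : Q = y + τ • K (x + dp))
    (h : 0 ≤ σ⁻¹ * ⟪P - dp - x, x⟫ + τ⁻¹ * ⟪Q - dq - y, y⟫) :
    σ⁻¹ * ‖P‖ ^ 2 + τ⁻¹ * ‖Q‖ ^ 2 + (σ⁻¹ * ‖dp‖ ^ 2 + τ⁻¹ * ‖dq‖ ^ 2) ≤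
      σ⁻¹ * ‖P - dp‖ ^ 2 + τ⁻¹ * ‖Q - dq‖ ^ 2 := by
  have key : σ⁻¹ * ⟪P, dp⟫ + τ⁻¹ * ⟪Q, dq⟫ =
      -(σ⁻¹ * ⟪P - dp - x, x⟫ + τ⁻¹ * ⟪Q - dq - y, y⟫) := by
    rw [hP, hQ]
    simp only [map_add, smul_add, inner_sub_left, inner_add_left, real_inner_smul_left,
      ContinuousLinearMap.adjoint_inner_left]
    rw [real_inner_comm dp x, real_inner_comm dq y, real_inner_comm (K x) y,
      real_inner_comm (K x) dq, real_inner_comm (K dp) y, real_inner_comm (K dp) dq]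
    field_simp
    ring
  rw [norm_sub_sq_real, norm_sub_sq_real]
  linarith

/-- The weighted squared distance of `(p, q)` from `(p', q')`, for which the iteration is
Fejér monotone. -/
def wdist (σ τ : ℝ) (p p' : X) (q q' : Y) : ℝ := σ⁻¹ * ‖p - p'‖ ^ 2 + τ⁻¹ * ‖q - q'‖ ^ 2

omit [CompleteSpace X] [CompleteSpace Y] in
/-- Opial's lemma: if the distances to two points converge and both points are weak cluster points,
then the points coincide. -/
lemma opial {σ τ : ℝ} (hσ : 0 < σ) (hτ : 0 < τ) {l U U' : Filter ℕ} [U.NeBot] [U'.NeBot]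
    (hU : U ≤ l) (hU' : U' ≤ l) {p : ℕ → X} {q : ℕ → Y} {a a' : X} {b b' : Y} {c c' : ℝ}
    (hc : Tendsto (fun k => wdist σ τ (p k) a (q k) b) l (nhds c))
    (hc' : Tendsto (fun k => wdist σ τ (p k) a' (q k) b') l (nhds c'))
    (hp : WeakTendstoAlong U p a) (hq : WeakTendstoAlong U q b)
    (hp' : WeakTendstoAlong U' p a') (hq' : WeakTendstoAlong U' q b') : a = a' ∧ b = b' := by
  have hσ' := inv_pos.mpr hσ
  have hτ' := inv_pos.mpr hτ
  -- The difference of the two squared distances is an affine function of `(p k, q k)`.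
  have hdiff : ∀ k, σ⁻¹ * ⟪p k, a - a'⟫ + τ⁻¹ * ⟪q k, b - b'⟫ =
      (wdist σ τ (p k) a' (q k) b' - wdist σ τ (p k) a (q k) b +
        (σ⁻¹ * (‖a‖ ^ 2 - ‖a'‖ ^ 2) + τ⁻¹ * (‖b‖ ^ 2 - ‖b'‖ ^ 2))) / 2 := by
    intro k
    simp only [wdist, norm_sub_sq_real, inner_sub_right]
    ring
  have hlim := ((hc'.sub hc).add_const
    (σ⁻¹ * (‖a‖ ^ 2 - ‖a'‖ ^ 2) + τ⁻¹ * (‖b‖ ^ 2 - ‖b'‖ ^ 2))).div_const 2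
  simp only [← hdiff] at hlim
  have h1 := tendsto_nhds_unique (hlim.mono_left hU)
    (((hp (a - a')).const_mul σ⁻¹).add ((hq (b - b')).const_mul τ⁻¹))
  have h2 := tendsto_nhds_unique (hlim.mono_left hU')
    (((hp' (a - a')).const_mul σ⁻¹).add ((hq' (b - b')).const_mul τ⁻¹))
  have h3 : σ⁻¹ * ‖a - a'‖ ^ 2 + τ⁻¹ * ‖b - b'‖ ^ 2 = 0 := by
    rw [← real_inner_self_eq_norm_sq, ← real_inner_self_eq_norm_sq, inner_sub_left a,
      inner_sub_left b]
    linarith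
  have h4 : σ⁻¹ * ‖a - a'‖ ^ 2 = 0 := by
    linarith [mul_nonneg hσ'.le (sq_nonneg ‖a - a'‖), mul_nonneg hτ'.le (sq_nonneg ‖b - b'‖)]
  have h5 : τ⁻¹ * ‖b - b'‖ ^ 2 = 0 := by linarith
  simp only [mul_eq_zero, hσ'.ne', hτ'.ne', false_or, ne_eq, OfNat.ofNat_ne_zero,
    not_false_eq_true, pow_eq_zero_iff, norm_eq_zero, sub_eq_zero] at h4 h5
  exact ⟨h4, h5⟩

/-- A saddle point is determined by the associated fixed point of the iteration, because
`(x, y) ↦ (x - σ K* y, y + τ K x)` is injective. -/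
lemma fixed_inj (K : X →L[ℝ] Y) {σ τ : ℝ} (hσ : 0 < σ) (hτ : 0 < τ) {x x' : X} {y y' : Y}
    (h1 : x - σ • (ContinuousLinearMap.adjoint K) y = x' - σ • (ContinuousLinearMap.adjoint K) y')
    (h2 : y + τ • K x = y' + τ • K x') : x = x' ∧ y = y' := by
  have e1 : x - x' = σ • (ContinuousLinearMap.adjoint K) (y - y') := by
    rw [map_sub, smul_sub, sub_eq_sub_iff_add_eq_add]
    rw [sub_eq_sub_iff_add_eq_add] at h1
    rw [h1, add_comm]
  have e2 : y - y' = -(τ • K (x - x')) := by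
    rw [map_sub, smul_sub, neg_sub, sub_eq_sub_iff_add_eq_add, h2, add_comm]
  have n1 : ‖x - x'‖ ^ 2 = σ * ⟪y - y', K (x - x')⟫ := by
    rw [← real_inner_self_eq_norm_sq]
    nth_rw 1 [e1]
    rw [real_inner_smul_left, ContinuousLinearMap.adjoint_inner_left]
  have n2 : ‖y - y'‖ ^ 2 = -(τ * ⟪y - y', K (x - x')⟫) := by
    rw [← real_inner_self_eq_norm_sq]
    nth_rw 2 [e2]
    rw [inner_neg_right, real_inner_smul_right]
  have hx : x = x' := by
    have : ⟪y - y', K (x - x')⟫ ≤ 0 := by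
      by_contra! hlt
      nlinarith [mul_pos hτ hlt, sq_nonneg ‖y - y'‖]
    have : ‖x - x'‖ ^ 2 = 0 := le_antisymm
      (by rw [n1]; exact mul_nonpos_of_nonneg_of_nonpos hσ.le this) (sq_nonneg _)
    simpa [sub_eq_zero] using this
  refine ⟨hx, ?_⟩
  simpa [hx] using h2

/-! ### The iterates -/

section Iteration

variable {K : X →L[ℝ] Y} {F : X → EReal} {G : Y → EReal} {σ τ : ℝ}
  {u : ℕ → X} {v : ℕ → Y} {ub : ℕ → X} {vb : ℕ → Y}

/-- Fejér monotonicity of the auxiliary variables with respect to the fixed points. -/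
lemma IsDR.wdist_succ_le (hFp : Proper F) (hGp : Proper G) (hσ : 0 < σ) (hτ : 0 < τ)
    (hDR : IsDR K F G σ τ u v ub vb) {xs : X} {ys : Y} (hs : IsSaddle K F G xs ys) (k : ℕ) :
    wdist σ τ (ub (k + 1)) (xs - σ • (ContinuousLinearMap.adjoint K) ys)
        (vb (k + 1)) (ys + τ • K xs) +
      (σ⁻¹ * ‖ub (k + 1) - ub k‖ ^ 2 + τ⁻¹ * ‖vb (k + 1) - vb k‖ ^ 2) ≤
    wdist σ τ (ub k) (xs - σ • (ContinuousLinearMap.adjoint K) ys) (vb k) (ys + τ • K xs) := by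
  obtain ⟨h1, h2, h3, h4⟩ := hDR k
  have m1 := ediff_mono hFp h1 hs.2.2.1
  have m2 := ediff_mono hGp h2 hs.2.2.2
  have e1 : σ⁻¹ • (ub k - u (k + 1)) - -(ContinuousLinearMap.adjoint K) ys =
      σ⁻¹ • (ub (k + 1) - (xs - σ • (ContinuousLinearMap.adjoint K) ys) - (ub (k + 1) - ub k) -
        (u (k + 1) - xs)) := by
    rw [show ub (k + 1) - (xs - σ • (ContinuousLinearMap.adjoint K) ys) - (ub (k + 1) - ub k) -
        (u (k + 1) - xs) = (ub k - u (k + 1)) + σ • (ContinuousLinearMap.adjoint K) ys by abel,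
      smul_add, inv_smul_smul₀ hσ.ne', sub_neg_eq_add]
  have e2 : τ⁻¹ • (vb k - v (k + 1)) - K xs =
      τ⁻¹ • (vb (k + 1) - (ys + τ • K xs) - (vb (k + 1) - vb k) - (v (k + 1) - ys)) := by
    rw [show vb (k + 1) - (ys + τ • K xs) - (vb (k + 1) - vb k) - (v (k + 1) - ys) =
        (vb k - v (k + 1)) - τ • K xs by abel, smul_sub τ⁻¹ _ (τ • K xs),
      inv_smul_smul₀ hτ.ne']
  rw [e1, real_inner_smul_left] at m1
  rw [e2, real_inner_smul_left] at m2
  have := descent K hσ hτ (u (k + 1) - xs) (ub (k + 1) - ub k)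
    (ub (k + 1) - (xs - σ • (ContinuousLinearMap.adjoint K) ys)) (v (k + 1) - ys)
    (vb (k + 1) - vb k) (vb (k + 1) - (ys + τ • K xs))
    (by
      rw [show v (k + 1) - ys + (vb (k + 1) - vb k) = (v (k + 1) + vb (k + 1) - vb k) - ys by abel,
        map_sub, smul_sub]
      nth_rw 1 [h3]
      abel)
    (by
      rw [show u (k + 1) - xs + (ub (k + 1) - ub k) = (u (k + 1) + ub (k + 1) - ub k) - xs by abel,
        map_sub, smul_sub]
      nth_rw 1 [h4]
      abel)
    (add_nonneg m1 m2)
  rw [show ub (k + 1) - (xs - σ • (ContinuousLinearMap.adjoint K) ys) - (ub (k + 1) - ub k) =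
      ub k - (xs - σ • (ContinuousLinearMap.adjoint K) ys) by abel,
    show vb (k + 1) - (ys + τ • K xs) - (vb (k + 1) - vb k) = vb k - (ys + τ • K xs) by abel]
    at this
  exact this

omit [InnerProductSpace ℝ X] [CompleteSpace X] [InnerProductSpace ℝ Y] [CompleteSpace Y] in
lemma wdist_nonneg (hσ : 0 < σ) (hτ : 0 < τ) (p p' : X) (q q' : Y) : 0 ≤ wdist σ τ p p' q q' := by
  unfold wdist
  positivity

lemma IsDR.antitone_wdist (hFp : Proper F) (hGp : Proper G) (hσ : 0 < σ) (hτ : 0 < τ)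
    (hDR : IsDR K F G σ τ u v ub vb) {xs : X} {ys : Y} (hs : IsSaddle K F G xs ys) :
    Antitone fun k => wdist σ τ (ub k) (xs - σ • (ContinuousLinearMap.adjoint K) ys)
      (vb k) (ys + τ • K xs) :=
  antitone_nat_of_succ_le fun k => (le_add_of_nonneg_right (by positivity)).trans
    (hDR.wdist_succ_le hFp hGp hσ hτ hs k)

lemma IsDR.exists_tendsto_wdist (hFp : Proper F) (hGp : Proper G) (hσ : 0 < σ) (hτ : 0 < τ)
    (hDR : IsDR K F G σ τ u v ub vb) {xs : X} {ys : Y} (hs : IsSaddle K F G xs ys) :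
    ∃ c, Tendsto (fun k => wdist σ τ (ub k) (xs - σ • (ContinuousLinearMap.adjoint K) ys)
      (vb k) (ys + τ • K xs)) atTop (nhds c) :=
  ⟨_, tendsto_atTop_ciInf (hDR.antitone_wdist hFp hGp hσ hτ hs)
    ⟨0, by rintro _ ⟨k, rfl⟩; exact wdist_nonneg hσ hτ _ _ _ _⟩⟩

omit [InnerProductSpace ℝ X] [CompleteSpace X] in
lemma tendsto_zero_of_sq {c : ℝ} (hc : 0 < c) {d : ℕ → X} {r : ℕ → ℝ}
    (h : ∀ k, c⁻¹ * ‖d k‖ ^ 2 ≤ r k) (hr : Tendsto r atTop (nhds 0)) :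
    Tendsto d atTop (nhds 0) := by
  rw [tendsto_zero_iff_norm_tendsto_zero]
  have h1 : Tendsto (fun k => ‖d k‖ ^ 2) atTop (nhds 0) := by
    refine squeeze_zero (fun k => sq_nonneg _) (g := fun k => c * r k) (fun k => ?_)
      (by simpa using hr.const_mul c)
    have := mul_le_mul_of_nonneg_left (h k) hc.le
    rwa [mul_inv_cancel_left₀ hc.ne'] at this
  simpa [Real.sqrt_sq] using h1.sqrt

/-- The increments of the auxiliary variables vanish strongly (asymptotic regularity). -/
lemma IsDR.tendsto_increments (hFp : Proper F) (hGp : Proper G) (hσ : 0 < σ) (hτ : 0 < τ)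
    (hDR : IsDR K F G σ τ u v ub vb) {xs : X} {ys : Y} (hs : IsSaddle K F G xs ys) :
    Tendsto (fun k => ub (k + 1) - ub k) atTop (nhds 0) ∧
      Tendsto (fun k => vb (k + 1) - vb k) atTop (nhds 0) := by
  obtain ⟨c, hc⟩ := hDR.exists_tendsto_wdist hFp hGp hσ hτ hs
  have hr := hc.sub ((tendsto_add_atTop_iff_nat 1).mpr hc)
  rw [sub_self] at hr
  constructor
  · refine tendsto_zero_of_sq hσ (fun k => ?_) hr
    have h1 := hDR.wdist_succ_le hFp hGp hσ hτ hs k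
    have h2 : 0 ≤ τ⁻¹ * ‖vb (k + 1) - vb k‖ ^ 2 := by positivity
    linarith
  · refine tendsto_zero_of_sq hτ (fun k => ?_) hr
    have h1 := hDR.wdist_succ_le hFp hGp hσ hτ hs k
    have h2 : 0 ≤ σ⁻¹ * ‖ub (k + 1) - ub k‖ ^ 2 := by positivity
    linarith

omit [InnerProductSpace ℝ X] [CompleteSpace X] in
lemma bound_of_sq {c M : ℝ} (hc : 0 < c) {p p' : X} (h : c⁻¹ * ‖p - p'‖ ^ 2 ≤ M) :
    ‖p - p'‖ ≤ √(c * M) := by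
  refine Real.le_sqrt_of_sq_le ?_
  have := mul_le_mul_of_nonneg_left h hc.le
  rwa [mul_inv_cancel_left₀ hc.ne'] at this

/-- The proximal points are bounded, by nonexpansiveness of the proximal maps and boundedness of the
auxiliary variables. -/
lemma IsDR.bounded (hFp : Proper F) (hGp : Proper G) (hσ : 0 < σ) (hτ : 0 < τ)
    (hDR : IsDR K F G σ τ u v ub vb) {xs : X} {ys : Y} (hs : IsSaddle K F G xs ys) :
    ∃ C D : ℝ, (∀ k, ‖u (k + 1)‖ ≤ C) ∧ ∀ k, ‖v (k + 1)‖ ≤ D := by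
  have hanti := hDR.antitone_wdist hFp hGp hσ hτ hs
  set M := wdist σ τ (ub 0) (xs - σ • (ContinuousLinearMap.adjoint K) ys) (vb 0) (ys + τ • K xs)
  refine ⟨√(σ * M) + ‖xs‖, √(τ * M) + ‖ys‖, fun k => ?_, fun k => ?_⟩
  · have h1 : ‖u (k + 1) - xs‖ ≤ ‖ub k - (xs - σ • (ContinuousLinearMap.adjoint K) ys)‖ :=
      prox_norm_le hFp hσ (hDR k).1 (by simpa [smul_smul, hσ.ne'] using hs.2.2.1)
    have h2 : wdist σ τ (ub k) (xs - σ • (ContinuousLinearMap.adjoint K) ys) (vb k)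
      (ys + τ • K xs) ≤ M := hanti (Nat.zero_le k)
    have h3 := bound_of_sq hσ ((le_add_of_nonneg_right (by positivity)).trans h2)
    have h4 := norm_sub_norm_le (u (k + 1)) xs
    linarith
  · have h1 : ‖v (k + 1) - ys‖ ≤ ‖vb k - (ys + τ • K xs)‖ :=
      prox_norm_le hGp hτ (hDR k).2.1 (by simpa [smul_smul, hτ.ne'] using hs.2.2.2)
    have h2 : wdist σ τ (ub k) (xs - σ • (ContinuousLinearMap.adjoint K) ys) (vb k)
      (ys + τ • K xs) ≤ M := hanti (Nat.zero_le k)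
    have h3 := bound_of_sq hτ ((le_add_of_nonneg_left (by positivity)).trans h2)
    have h4 := norm_sub_norm_le (v (k + 1)) ys
    linarith

/-- Along every ultrafilter finer than `atTop` the iteration converges weakly to a saddle point and
its fixed point; the index of `u` and `v` is shifted because `u 0` and `v 0` are arbitrary. -/
lemma IsDR.exists_cluster
    (hFp : Proper F) (hFc : ConvexE F) (hFl : LowerSemicontinuous F)
    (hGp : Proper G) (hGc : ConvexE G) (hGl : LowerSemicontinuous G) (hσ : 0 < σ) (hτ : 0 < τ)
    (hDR : IsDR K F G σ τ u v ub vb) (hexists : ∃ xs : X, ∃ ys : Y, IsSaddle K F G xs ys)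
    (U : Ultrafilter ℕ) (hU : (U : Filter ℕ) ≤ atTop) :
    ∃ xs : X, ∃ ys : Y, IsSaddle K F G xs ys ∧
      WeakTendstoAlong (U : Filter ℕ) (fun k => u (k + 1)) xs ∧
      WeakTendstoAlong (U : Filter ℕ) (fun k => v (k + 1)) ys ∧
      WeakTendstoAlong (U : Filter ℕ) ub (xs - σ • (ContinuousLinearMap.adjoint K) ys) ∧
      WeakTendstoAlong (U : Filter ℕ) vb (ys + τ • K xs) := by
  obtain ⟨xs, ys, hs⟩ := hexists
  obtain ⟨C, D, hC, hD⟩ := hDR.bounded hFp hGp hσ hτ hs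
  obtain ⟨hdp, hdq⟩ := hDR.tendsto_increments hFp hGp hσ hτ hs
  replace hdp := hdp.mono_left hU
  replace hdq := hdq.mono_left hU
  obtain ⟨x, hx⟩ := exists_weakTendstoAlong U (fun k => u (k + 1)) C hC
  obtain ⟨y, hy⟩ := exists_weakTendstoAlong U (fun k => v (k + 1)) D hD
  have hdp' := WeakTendstoAlong.of_tendsto hdp
  have hdq' := WeakTendstoAlong.of_tendsto hdq
  -- The update rules express the subgradients through the other variable, up to increments.
  have eξ : ∀ k, σ⁻¹ • (ub k - u (k + 1)) = (-1 : ℝ) • (ContinuousLinearMap.adjoint K)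
      (v (k + 1) + (vb (k + 1) - vb k)) - σ⁻¹ • (ub (k + 1) - ub k) := by
    intro k
    rw [eq_sub_iff_add_eq, ← smul_add, show ub k - u (k + 1) + (ub (k + 1) - ub k) =
      ub (k + 1) - u (k + 1) by abel]
    nth_rw 1 [(hDR k).2.2.1]
    rw [sub_sub_cancel_left, smul_neg, inv_smul_smul₀ hσ.ne', neg_one_smul, add_sub_assoc]
  have eη : ∀ k, τ⁻¹ • (vb k - v (k + 1)) =
      K (u (k + 1) + (ub (k + 1) - ub k)) - τ⁻¹ • (vb (k + 1) - vb k) := by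
    intro k
    rw [eq_sub_iff_add_eq, ← smul_add, show vb k - v (k + 1) + (vb (k + 1) - vb k) =
      vb (k + 1) - v (k + 1) by abel]
    nth_rw 1 [(hDR k).2.2.2]
    rw [add_sub_cancel_left, inv_smul_smul₀ hτ.ne', add_sub_assoc]
  have wξ : WeakTendstoAlong (U : Filter ℕ) (fun k => σ⁻¹ • (ub k - u (k + 1)))
      (-(ContinuousLinearMap.adjoint K) y) := by
    simpa [eξ] using (((hy.add hdq').map (ContinuousLinearMap.adjoint K)).smul (-1)).sub
      (hdp'.smul σ⁻¹)
  have wη : WeakTendstoAlong (U : Filter ℕ) (fun k => τ⁻¹ • (vb k - v (k + 1))) (K x) := by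
    simpa [eη] using ((hx.add hdp').map K).sub (hdq'.smul τ⁻¹)
  -- The bilinear terms cancel by skew-symmetry, so each pairing tends to the pairing of the limits.
  have hpair : Tendsto (fun k => ⟪σ⁻¹ • (ub k - u (k + 1)), u (k + 1)⟫ +
      ⟪τ⁻¹ • (vb k - v (k + 1)), v (k + 1)⟫) (U : Filter ℕ)
      (nhds (⟪-(ContinuousLinearMap.adjoint K) y, x⟫ + ⟪K x, y⟫)) := by
    have hz : ⟪-(ContinuousLinearMap.adjoint K) y, x⟫ + ⟪K x, y⟫ = 0 := by
      rw [inner_neg_left, ContinuousLinearMap.adjoint_inner_left, real_inner_comm, neg_add_cancel]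
    have hKdp : Tendsto (fun k => K (ub (k + 1) - ub k)) (U : Filter ℕ) (nhds 0) := by
      simpa only [map_zero, Function.comp_def] using (K.continuous.tendsto 0).comp hdp
    have hKdq : Tendsto (fun k => (ContinuousLinearMap.adjoint K) (vb (k + 1) - vb k))
        (U : Filter ℕ) (nhds 0) := by
      simpa only [map_zero, Function.comp_def] using
        ((ContinuousLinearMap.adjoint K).continuous.tendsto 0).comp hdq
    have t := (((tendsto_inner_zero hKdp hD).sub (tendsto_inner_zero hKdq hC)).sub
      ((tendsto_inner_zero hdp hC).const_mul σ⁻¹)).sub ((tendsto_inner_zero hdq hD).const_mul τ⁻¹)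
    rw [hz]
    simp only [mul_zero, sub_zero] at t
    refine t.congr fun k => ?_
    rw [eξ, eη]
    simp only [map_add, inner_sub_left, inner_add_left, real_inner_smul_left]
    rw [ContinuousLinearMap.adjoint_inner_left K (u (k + 1)) (v (k + 1)),
      real_inner_comm (K (u (k + 1))) (v (k + 1))]
    ring
  obtain ⟨hF, hG⟩ := ediff_of_weak hFp hFc hFl hGp hGc hGl (fun k => (hDR k).1)
    (fun k => (hDR k).2.1) hx hy wξ wη hpair
  refine ⟨x, y, ⟨ne_top_of_ediff hFp hF, ne_top_of_ediff hGp hG, hF, hG⟩, hx, hy, ?_, ?_⟩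
  · simpa [smul_smul, hσ.ne', sub_eq_add_neg] using hx.add (wξ.smul σ)
  · simpa [smul_smul, hτ.ne'] using hy.add (wη.smul τ)

end Iteration

/-- Proposition: weak convergence of the basic Douglas--Rachford iteration. -/
theorem statement5
    (F : X → EReal) (G : Y → EReal) (K : X →L[ℝ] Y)
    (hFp : Proper F) (hFc : ConvexE F) (hFl : LowerSemicontinuous F)
    (hGp : Proper G) (hGc : ConvexE G) (hGl : LowerSemicontinuous G)
    (hexists : ∃ xs : X, ∃ ys : Y, IsSaddle K F G xs ys)
    (σ τ : ℝ) (hσ : 0 < σ) (hτ : 0 < τ)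
    (u : ℕ → X) (v : ℕ → Y) (ub : ℕ → X) (vb : ℕ → Y)
    (hDR : IsDR K F G σ τ u v ub vb) :
    ∃ xs : X, ∃ ys : Y, IsSaddle K F G xs ys ∧
      WeakTendsto u xs ∧ WeakTendsto v ys ∧
      WeakTendsto ub (xs - σ • (ContinuousLinearMap.adjoint K) ys) ∧
      WeakTendsto vb (ys + τ • K xs) := by
  have hcl := hDR.exists_cluster hFp hFc hFl hGp hGc hGl hσ hτ hexists
  obtain ⟨xs, ys, hs, h1, h2, h3, h4⟩ := hcl (hyperfilter ℕ) Nat.hyperfilter_le_atTop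
  have hall : ∀ U : Ultrafilter ℕ, (U : Filter ℕ) ≤ atTop →
      WeakTendstoAlong (U : Filter ℕ) (fun k => u (k + 1)) xs ∧
      WeakTendstoAlong (U : Filter ℕ) (fun k => v (k + 1)) ys ∧
      WeakTendstoAlong (U : Filter ℕ) ub (xs - σ • (ContinuousLinearMap.adjoint K) ys) ∧
      WeakTendstoAlong (U : Filter ℕ) vb (ys + τ • K xs) := by
    intro U hU
    obtain ⟨xs', ys', hs', g1, g2, g3, g4⟩ := hcl U hU
    obtain ⟨c, hc⟩ := hDR.exists_tendsto_wdist hFp hGp hσ hτ hs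
    obtain ⟨c', hc'⟩ := hDR.exists_tendsto_wdist hFp hGp hσ hτ hs'
    obtain ⟨e1, e2⟩ := opial hσ hτ Nat.hyperfilter_le_atTop hU hc hc' h3 h4 g3 g4
    obtain ⟨rfl, rfl⟩ := fixed_inj K hσ hτ e1 e2
    exact ⟨g1, g2, g3, g4⟩
  refine ⟨xs, ys, hs, fun w => ?_, fun w => ?_, fun w => ?_, fun w => ?_⟩
  · rw [← tendsto_add_atTop_iff_nat 1, tendsto_iff_ultrafilter]
    exact fun U hU => (hall U hU).1 w
  · rw [← tendsto_add_atTop_iff_nat 1, tendsto_iff_ultrafilter]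
    exact fun U hU => (hall U hU).2.1 w
  · rw [tendsto_iff_ultrafilter]
    exact fun U hU => (hall U hU).2.2.1 w
  · rw [tendsto_iff_ultrafilter]
    exact fun U hU => (hall U hU).2.2.2 w

end
end

section
/- Let X₀ ⊆ dom F and Y₀ ⊆ dom G be bounded with X₀ × Y₀ containing a saddle point, and let (xᵏ, yᵏ, x̄ᵏ, ȳᵏ) be a Douglas–Rachford iteration with step sizes σ, τ > 0. Then, in addition to the weak convergence of (xᵏ, yᵏ) to a saddle point (x*, y*), the ergodic sequences x_erg^k = (1/k)∑_{j=1}^{k} xʲ and y_erg^k = (1/k)∑_{j=1}^{k} yʲ converge weakly to x* and y*, respectively, and for every k ≥ 1: 𝔊_{X₀×Y₀}(x_erg^k, y_erg^k) ≤ (1/k)·sup_{(x,y)∈X₀×Y₀} [‖x̄⁰ − x + σK*y‖²/(2σ) + ‖ȳ⁰ − y − τKx‖²/(2τ)]. -/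
/-!
For a pair `(x, y)` let `energy K σ τ x y (ub k) (vb k)` be half the squared distance, weighted by
`1/σ` and `1/τ`, from the shadow point `(ub k, vb k)` to `(x - σ K* y, y + τ K x)`. Since
`(x, y) ↦ (K* y, -K x)` is skew, one Douglas--Rachford step satisfies an exact identity
(`energy_identity`), which together with the two subgradient inequalities bounds the Lagrangian gap
of the new iterate at `(x, y)` plus the squared step length by the decrease of the energy
(`dr_step`). Averaging over the steps, telescoping and applying Jensen's inequality give the
`O(1/k)` bound (`ergodic_estimate`, `gap_le`).

For weak convergence, the gap at a saddle point is nonnegative, so the energy there is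
nonincreasing and the steps tend to zero (`fejer`, `steps_tendsto_zero`). The iterates are bounded
because `(x, y) ↦ (x - σ K* y, y + τ K x)` is expansive (`skew_expansive`), so they converge weakly
along every ultrafilter finer than `atTop` (`exists_weak_limit`). Passing to the limit in `dr_step`,
with weak lower semicontinuity from Hahn--Banach separation, shows that such limits are saddle
points (`isSaddle_of_weak_limit`), and Opial's argument shows that they all agree
(`weak_limit_unique`). Hence the iterates converge weakly along `atTop`, and so do their Cesàro
means.
-/

open scoped RealInnerProductSpace
open Filter

noncomputable section

variable {X Y : Type*} [NormedAddCommGroup X] [InnerProductSpace ℝ X] [CompleteSpace X]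
  [NormedAddCommGroup Y] [InnerProductSpace ℝ Y] [CompleteSpace Y]

set_option linter.unusedSectionVars false

/-! ### Extended-real convex functionals -/

lemma coe_toReal_of_edom {F : X → EReal} (hF : Proper F) {x : X} (hx : x ∈ edom F) :
    (((F x).toReal : ℝ) : EReal) = F x :=
  EReal.coe_toReal hx (hF.1 x)

lemma mem_edom_of_mem_ediff {F : X → EReal} (hF : Proper F) {x ξ : X} (h : ξ ∈ ediff F x) :
    x ∈ edom F := by
  obtain ⟨z, hz⟩ := hF.2
  intro hx
  have := h z
  rw [hx, EReal.top_add_coe] at this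
  exact hz (top_le_iff.1 this)

lemma toReal_add_inner_le {F : X → EReal} (hF : Proper F) {x ξ z : X} (h : ξ ∈ ediff F x)
    (hz : z ∈ edom F) : (F x).toReal + ⟪ξ, z - x⟫ ≤ (F z).toReal := by
  have := h z
  rw [← coe_toReal_of_edom hF (mem_edom_of_mem_ediff hF h), ← coe_toReal_of_edom hF hz] at this
  exact_mod_cast this

lemma convexOn_toReal {F : X → EReal} (hF : Proper F) (hc : ConvexE F) :
    ConvexOn ℝ (edom F) (fun x => (F x).toReal) := by
  have key : ∀ x ∈ edom F, ∀ z ∈ edom F, ∀ a b : ℝ, 0 ≤ a → 0 ≤ b → a + b = 1 →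
      F (a • x + b • z) ≤ ((a * (F x).toReal + b * (F z).toReal : ℝ) : EReal) := by
    intro x hx z hz a b ha hb hab
    obtain rfl : b = 1 - a := by linarith
    have := hc x z a ha (by linarith)
    rw [← coe_toReal_of_edom hF hx, ← coe_toReal_of_edom hF hz] at this
    exact_mod_cast this
  have mem : ∀ x ∈ edom F, ∀ z ∈ edom F, ∀ a b : ℝ, 0 ≤ a → 0 ≤ b → a + b = 1 →
      a • x + b • z ∈ edom F := fun x hx z hz a b ha hb hab h => by
    have := key x hx z hz a b ha hb hab
    rw [h] at this
    exact EReal.coe_ne_top _ (top_le_iff.1 this)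
  refine ⟨fun x hx z hz a b ha hb hab => mem x hx z hz a b ha hb hab,
    fun x hx z hz a b ha hb hab => ?_⟩
  have := key x hx z hz a b ha hb hab
  rw [← coe_toReal_of_edom hF (mem x hx z hz a b ha hb hab)] at this
  exact_mod_cast this

lemma convex_sublevel {F : X → EReal} (hc : ConvexE F) (c : ℝ) : Convex ℝ {x | F x ≤ c} := by
  intro x hx z hz a b ha hb hab
  obtain rfl : b = 1 - a := by linarith
  refine (hc x z a ha (by linarith)).trans ?_
  calc (a : EReal) * F x + ((1 - a : ℝ) : EReal) * F z
      ≤ (a : EReal) * c + ((1 - a : ℝ) : EReal) * c :=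
        add_le_add (mul_le_mul_of_nonneg_left hx (by exact_mod_cast ha))
          (mul_le_mul_of_nonneg_left hz (by exact_mod_cast hb))
    _ = ((a * c + (1 - a) * c : ℝ) : EReal) := by push_cast; rfl
    _ = c := by congr 1; ring

/-! ### Weak compactness and weak lower semicontinuity -/

/-- Weak compactness of balls: a bounded sequence converges weakly along every ultrafilter.
The limit is the Riesz representative of the functional `w ↦ lim ⟪u k, w⟫`. -/
lemma exists_weak_limit {u : ℕ → X} {C : ℝ} (hu : ∀ k, ‖u k‖ ≤ C) (U : Ultrafilter ℕ) :
    ∃ z : X, ∀ w : X, Tendsto (fun k => ⟪u k, w⟫) U (nhds ⟪z, w⟫) := by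
  have bd : ∀ w k, |⟪u k, w⟫| ≤ C * ‖w‖ := fun w k =>
    (abs_real_inner_le_norm _ _).trans (mul_le_mul_of_nonneg_right (hu k) (norm_nonneg _))
  have ex : ∀ w : X, ∃ l : ℝ, |l| ≤ C * ‖w‖ ∧ Tendsto (fun k => ⟪u k, w⟫) U (nhds l) := by
    intro w
    obtain ⟨l, hl, hl'⟩ := (isCompact_Icc (a := -(C * ‖w‖)) (b := C * ‖w‖)).ultrafilter_le_nhds'
      (U.map fun k => ⟪u k, w⟫) (Filter.mem_map.2 (Filter.univ_mem' fun k => abs_le.1 (bd w k)))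
    exact ⟨l, abs_le.2 hl, hl'⟩
  choose L hL hlim using ex
  let Λ : X →ₗ[ℝ] ℝ :=
    { toFun := L
      map_add' := fun v w => tendsto_nhds_unique (hlim (v + w))
        (by simpa only [inner_add_right] using (hlim v).add (hlim w))
      map_smul' := fun c w => tendsto_nhds_unique (hlim (c • w))
        (by simpa only [inner_smul_right, RingHom.id_apply, smul_eq_mul] using (hlim w).const_mul c) }
  refine ⟨(InnerProductSpace.toDual ℝ X).symm (Λ.mkContinuous C fun w => hL w), fun w => ?_⟩
  rw [InnerProductSpace.toDual_symm_apply]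
  exact hlim w

/-- Mazur: a convex lower semicontinuous functional is weakly sequentially lower semicontinuous,
here along an ultrafilter. -/
lemma eventually_lt_of_weak_s7 {F : X → EReal} (hc : ConvexE F) (hl : LowerSemicontinuous F)
    {U : Ultrafilter ℕ} {u : ℕ → X} {z : X}
    (hu : ∀ w : X, Tendsto (fun k => ⟪u k, w⟫) U (nhds ⟪z, w⟫)) {c : ℝ} (hcz : (c : EReal) < F z) :
    ∀ᶠ k in (U : Filter ℕ), (c : EReal) < F (u k) := by
  obtain ⟨f, r, hf, hr⟩ := geometric_hahn_banach_closed_point (convex_sublevel hc c)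
    (hl.isClosed_preimage (c : EReal)) (x := z) (not_le.2 hcz)
  have hlim := hu ((InnerProductSpace.toDual ℝ X).symm f)
  have hcomm : ∀ x : X, ⟪x, (InnerProductSpace.toDual ℝ X).symm f⟫ = f x := fun x => by
    rw [real_inner_comm, InnerProductSpace.toDual_symm_apply]
  simp only [hcomm] at hlim
  filter_upwards [hlim.eventually (lt_mem_nhds hr)] with k hk
  by_contra h
  exact lt_asymm hk (hf _ (not_lt.1 h))

/-! ### The one-step identity -/

/-- The squared distance of the shadow point `(xb, yb)` to `(x - σ K* y, y + τ K x)` in the metric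
weighted by `1/σ` and `1/τ`, halved. For a saddle point `(x, y)` the latter is a fixed point of the
iteration. -/
def energy (K : X →L[ℝ] Y) (σ τ : ℝ) (x : X) (y : Y) (xb : X) (yb : Y) : ℝ :=
  ‖xb - x + σ • (ContinuousLinearMap.adjoint K) y‖ ^ 2 / (2 * σ)
    + ‖yb - y - τ • K x‖ ^ 2 / (2 * τ)

/-- One Douglas--Rachford step, as an exact identity. It rests on the operator
`(x, y) ↦ (K* y, -K x)` being skew. -/
lemma energy_identity (K : X →L[ℝ] Y) {σ τ : ℝ} (hσ : 0 < σ) (hτ : 0 < τ) (x p xb xb' : X)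
    (y q yb yb' : Y)
    (hx : xb' = p - σ • (ContinuousLinearMap.adjoint K) (q + yb' - yb))
    (hy : yb' = q + τ • K (p + xb' - xb)) :
    ⟪σ⁻¹ • (xb - p), p - x⟫ + ⟪τ⁻¹ • (yb - q), q - y⟫ + ⟪K p, y⟫ - ⟪K x, q⟫
      = energy K σ τ x y xb yb - energy K σ τ x y xb' yb'
        - (‖xb - xb'‖ ^ 2 / (2 * σ) + ‖yb - yb'‖ ^ 2 / (2 * τ)) := by
  obtain ⟨a, rfl⟩ : ∃ a, xb = xb' + a := ⟨xb - xb', by abel⟩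
  obtain ⟨b, rfl⟩ : ∃ b, yb = yb' + b := ⟨yb - yb', by abel⟩
  have e1 : q + yb' - (yb' + b) = q - b := by abel
  have e2 : p + xb' - (xb' + a) = p - a := by abel
  rw [e1] at hx
  rw [e2] at hy
  have hA : xb' + a - x + σ • (ContinuousLinearMap.adjoint K) y
      = (xb' - x + σ • (ContinuousLinearMap.adjoint K) y) + a := by abel
  have hB : yb' + b - y - τ • K x = (yb' - y - τ • K x) + b := by abel
  have hA' : xb' - x + σ • (ContinuousLinearMap.adjoint K) y
      = (p - x) - σ • (ContinuousLinearMap.adjoint K) (q - b - y) := by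
    rw [hx]; simp only [map_sub, smul_sub]; abel
  have hB' : yb' - y - τ • K x = (q - y) + τ • K (p - a - x) := by
    rw [hy]; simp only [map_sub, smul_sub]; abel
  have hA2 : xb' + a - p = a - σ • (ContinuousLinearMap.adjoint K) (q - b) := by
    rw [hx]; abel
  have hB2 : yb' + b - q = b + τ • K (p - a) := by rw [hy]; abel
  have hσ' := hσ.ne'
  have hτ' := hτ.ne'
  unfold energy
  rw [hA, hB, norm_add_sq_real, norm_add_sq_real (yb' - y - τ • K x), hA', hB', hA2, hB2,
    add_sub_cancel_left, add_sub_cancel_left]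
  have key : σ⁻¹ * ⟪a - σ • (ContinuousLinearMap.adjoint K) (q - b), p - x⟫
      + τ⁻¹ * ⟪b + τ • K (p - a), q - y⟫ + ⟪K p, y⟫ - ⟪K x, q⟫
      = σ⁻¹ * ⟪(p - x) - σ • (ContinuousLinearMap.adjoint K) (q - b - y), a⟫
        + τ⁻¹ * ⟪(q - y) + τ • K (p - a - x), b⟫ := by
    simp only [inner_sub_left, inner_add_left, real_inner_smul_left,
      ContinuousLinearMap.adjoint_inner_left, mul_sub, mul_add, inv_mul_cancel_left₀ hσ',
      inv_mul_cancel_left₀ hτ']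
    simp only [map_sub, inner_sub_left, inner_sub_right, real_inner_comm a p, real_inner_comm a x,
      real_inner_comm b q, real_inner_comm b y, real_inner_comm q (K p), real_inner_comm q (K a),
      real_inner_comm q (K x), real_inner_comm b (K p), real_inner_comm b (K a),
      real_inner_comm b (K x), real_inner_comm y (K p), real_inner_comm y (K a)]
    ring
  simp only [real_inner_smul_left]
  rw [key]
  field_simp
  ring

/-- The one-step estimate: the primal-dual gap function of the new iterate at `(x, y)`, plus the
squared weighted step length, is bounded by the decrease of the energy. -/
lemma dr_step {K : X →L[ℝ] Y} {F : X → EReal} {G : Y → EReal} (hF : Proper F) (hG : Proper G)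
    {σ τ : ℝ} (hσ : 0 < σ) (hτ : 0 < τ) {u : ℕ → X} {v : ℕ → Y} {ub : ℕ → X} {vb : ℕ → Y}
    (h : IsDR K F G σ τ u v ub vb) {x : X} {y : Y} (hx : x ∈ edom F) (hy : y ∈ edom G) (k : ℕ) :
    (F (u (k+1))).toReal + (G (v (k+1))).toReal + ⟪K (u (k+1)), y⟫ - ⟪K x, v (k+1)⟫
        + (‖ub k - ub (k+1)‖ ^ 2 / (2 * σ) + ‖vb k - vb (k+1)‖ ^ 2 / (2 * τ))
      ≤ (F x).toReal + (G y).toReal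
        + (energy K σ τ x y (ub k) (vb k) - energy K σ τ x y (ub (k+1)) (vb (k+1))) := by
  obtain ⟨h1, h2, h3, h4⟩ := h k
  have e := energy_identity K hσ hτ x (u (k+1)) (ub k) (ub (k+1)) y (v (k+1)) (vb k) (vb (k+1))
    h3 h4
  have f1 := toReal_add_inner_le hF h1 hx
  have f2 := toReal_add_inner_le hG h2 hy
  rw [← neg_sub (u (k+1)) x, inner_neg_right] at f1
  rw [← neg_sub (v (k+1)) y, inner_neg_right] at f2
  linarith

lemma energy_nonneg (K : X →L[ℝ] Y) {σ τ : ℝ} (hσ : 0 < σ) (hτ : 0 < τ) (x xb : X) (y yb : Y) :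
    0 ≤ energy K σ τ x y xb yb := by unfold energy; positivity

/-! ### The ergodic gap estimate -/

/-- The Jensen inequality for Cesàro means: they stay in the domain, where the real values of `F`
satisfy the usual bound. -/
lemma cesaro_jensen {F : X → EReal} (hF : Proper F) (hc : ConvexE F) {u : ℕ → X}
    (hu : ∀ j, u j ∈ edom F) {k : ℕ} (hk : 1 ≤ k) :
    (k : ℝ)⁻¹ • ∑ j ∈ Finset.range k, u j ∈ edom F ∧
      (F ((k : ℝ)⁻¹ • ∑ j ∈ Finset.range k, u j)).toReal
        ≤ (k : ℝ)⁻¹ * ∑ j ∈ Finset.range k, (F (u j)).toReal := by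
  have hk0 : (k : ℝ) ≠ 0 := by positivity
  have hw : ∑ _j ∈ Finset.range k, (k : ℝ)⁻¹ = 1 := by simp [hk0]
  have hcx := convexOn_toReal hF hc
  rw [Finset.smul_sum, Finset.mul_sum]
  exact ⟨hcx.1.sum_mem (fun _ _ => by positivity) hw fun j _ => hu j,
    hcx.map_sum_le (fun _ _ => by positivity) hw fun j _ => hu j⟩

/-- The `O(1/k)` bound at a fixed comparison point: averaging the one-step estimate telescopes the
energy. -/
lemma ergodic_estimate {K : X →L[ℝ] Y} {F : X → EReal} {G : Y → EReal} (hF : Proper F)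
    (hFc : ConvexE F) (hG : Proper G) (hGc : ConvexE G)
    {σ τ : ℝ} (hσ : 0 < σ) (hτ : 0 < τ) {u : ℕ → X} {v : ℕ → Y} {ub : ℕ → X} {vb : ℕ → Y}
    (h : IsDR K F G σ τ u v ub vb) {x : X} {y : Y} (hx : x ∈ edom F) (hy : y ∈ edom G)
    {k : ℕ} (hk : 1 ≤ k) {p : X} {q : Y}
    (hp : p = (k : ℝ)⁻¹ • ∑ j ∈ Finset.range k, u (j+1))
    (hq : q = (k : ℝ)⁻¹ • ∑ j ∈ Finset.range k, v (j+1)) :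
    p ∈ edom F ∧ q ∈ edom G ∧
      ⟪K p, y⟫ - ⟪K x, q⟫ - (G y).toReal - (F x).toReal + (F p).toReal + (G q).toReal
        ≤ (k : ℝ)⁻¹ * energy K σ τ x y (ub 0) (vb 0) := by
  have hk0 : (0 : ℝ) < k := by exact_mod_cast hk
  obtain ⟨p1, p2⟩ := cesaro_jensen hF hFc (u := fun j => u (j+1))
    (fun j => mem_edom_of_mem_ediff hF (h j).1) hk
  obtain ⟨q1, q2⟩ := cesaro_jensen hG hGc (u := fun j => v (j+1))
    (fun j => mem_edom_of_mem_ediff hG (h j).2.1) hk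
  rw [← hp] at p1 p2
  rw [← hq] at q1 q2
  refine ⟨p1, q1, ?_⟩
  have hs := Finset.sum_le_sum fun j (_ : j ∈ Finset.range k) =>
    (le_add_of_nonneg_right (by positivity)).trans (dr_step hF hG hσ hτ h hx hy j)
  rw [Finset.sum_add_distrib, Finset.sum_range_sub'
    (fun j => energy K σ τ x y (ub j) (vb j))] at hs
  simp only [Finset.sum_add_distrib, Finset.sum_sub_distrib, Finset.sum_const, Finset.card_range,
    nsmul_eq_mul] at hs
  have hE := energy_nonneg K hσ hτ x (ub k) y (vb k)
  have e1 : ⟪K p, y⟫ = (k : ℝ)⁻¹ * ∑ j ∈ Finset.range k, ⟪K (u (j+1)), y⟫ := by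
    rw [hp, map_smul, map_sum, real_inner_smul_left, sum_inner]
  have e2 : ⟪K x, q⟫ = (k : ℝ)⁻¹ * ∑ j ∈ Finset.range k, ⟪K x, v (j+1)⟫ := by
    rw [hq, real_inner_smul_right, inner_sum]
  have hs' := mul_le_mul_of_nonneg_left
    (hs.trans (add_le_add_right (sub_le_self _ hE) _)) (inv_nonneg.2 hk0.le)
  have e3 : (k : ℝ)⁻¹ * (k * (F x).toReal + k * (G y).toReal + energy K σ τ x y (ub 0) (vb 0))
      = (F x).toReal + (G y).toReal + (k : ℝ)⁻¹ * energy K σ τ x y (ub 0) (vb 0) := by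
    field_simp
  rw [e3] at hs'
  rw [e1, e2]
  linarith

/-- The bound on the restricted gap. -/
lemma gap_le {K : X →L[ℝ] Y} {F : X → EReal} {G : Y → EReal} (hF : Proper F)
    (hFc : ConvexE F) (hG : Proper G) (hGc : ConvexE G) {X₀ : Set X} {Y₀ : Set Y}
    (hX₀ : X₀ ⊆ edom F) (hY₀ : Y₀ ⊆ edom G)
    {σ τ : ℝ} (hσ : 0 < σ) (hτ : 0 < τ) {u : ℕ → X} {v : ℕ → Y} {ub : ℕ → X} {vb : ℕ → Y}
    (h : IsDR K F G σ τ u v ub vb) {k : ℕ} (hk : 1 ≤ k) {p : X} {q : Y}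
    (hp : p = (k : ℝ)⁻¹ • ∑ j ∈ Finset.range k, u (j+1))
    (hq : q = (k : ℝ)⁻¹ • ∑ j ∈ Finset.range k, v (j+1)) :
    gap K F G X₀ Y₀ p q ≤ (((k : ℝ)⁻¹ : ℝ) : EReal) *
      ⨆ x ∈ X₀, ⨆ y ∈ Y₀, ((energy K σ τ x y (ub 0) (vb 0) : ℝ) : EReal) := by
  refine iSup₂_le fun x hx => iSup₂_le fun y hy => ?_
  obtain ⟨h1, h2, h3⟩ := ergodic_estimate hF hFc hG hGc hσ hτ h (hX₀ hx) (hY₀ hy) hk hp hq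
  rw [← coe_toReal_of_edom hF h1, ← coe_toReal_of_edom hG h2]
  calc _ ≤ (((k : ℝ)⁻¹ : ℝ) : EReal) * ((energy K σ τ x y (ub 0) (vb 0) : ℝ) : EReal) := by
        exact_mod_cast h3
    _ ≤ _ := by
        refine mul_le_mul_of_nonneg_left ?_ (by exact_mod_cast inv_nonneg.2 (Nat.cast_nonneg k))
        exact le_iSup₂_of_le x hx (le_iSup₂_of_le y hy le_rfl)

/-! ### Fejér monotonicity and asymptotic regularity -/

/-- At a saddle point the Lagrangian gap is nonnegative. -/
lemma saddle_le {K : X →L[ℝ] Y} {F : X → EReal} {G : Y → EReal} (hF : Proper F) (hG : Proper G)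
    {xs : X} {ys : Y} (hs : IsSaddle K F G xs ys) {x : X} {y : Y} (hx : x ∈ edom F)
    (hy : y ∈ edom G) :
    (F xs).toReal + (G ys).toReal ≤ (F x).toReal + (G y).toReal + ⟪K x, ys⟫ - ⟪K xs, y⟫ := by
  have h1 := toReal_add_inner_le hF hs.2.2.1 hx
  have h2 := toReal_add_inner_le hG hs.2.2.2 hy
  simp only [inner_neg_left, ContinuousLinearMap.adjoint_inner_left, inner_sub_right]
    at h1 h2
  rw [real_inner_comm (K x), real_inner_comm (K xs)] at h1
  linarith

/-- Fejér monotonicity: the energy at a saddle point does not increase, with decrease controlling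
the step length. -/
lemma fejer {K : X →L[ℝ] Y} {F : X → EReal} {G : Y → EReal} (hF : Proper F) (hG : Proper G)
    {σ τ : ℝ} (hσ : 0 < σ) (hτ : 0 < τ) {u : ℕ → X} {v : ℕ → Y} {ub : ℕ → X} {vb : ℕ → Y}
    (h : IsDR K F G σ τ u v ub vb) {xs : X} {ys : Y} (hs : IsSaddle K F G xs ys) (k : ℕ) :
    ‖ub k - ub (k+1)‖ ^ 2 / (2 * σ) + ‖vb k - vb (k+1)‖ ^ 2 / (2 * τ)
      ≤ energy K σ τ xs ys (ub k) (vb k) - energy K σ τ xs ys (ub (k+1)) (vb (k+1)) := by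
  have h1 := dr_step hF hG hσ hτ h hs.1 hs.2.1 k
  have h2 := saddle_le hF hG hs (mem_edom_of_mem_ediff hF (h k).1)
    (mem_edom_of_mem_ediff hG (h k).2.1)
  linarith

lemma exists_tendsto_energy {K : X →L[ℝ] Y} {F : X → EReal} {G : Y → EReal} (hF : Proper F)
    (hG : Proper G) {σ τ : ℝ} (hσ : 0 < σ) (hτ : 0 < τ) {u : ℕ → X} {v : ℕ → Y} {ub : ℕ → X}
    {vb : ℕ → Y} (h : IsDR K F G σ τ u v ub vb) {xs : X} {ys : Y} (hs : IsSaddle K F G xs ys) :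
    Antitone (fun k => energy K σ τ xs ys (ub k) (vb k)) ∧
      ∃ l, Tendsto (fun k => energy K σ τ xs ys (ub k) (vb k)) atTop (nhds l) := by
  have hanti : Antitone (fun k => energy K σ τ xs ys (ub k) (vb k)) :=
    antitone_nat_of_succ_le fun k => by
      have h1 := fejer hF hG hσ hτ h hs k
      have h2 : 0 ≤ ‖ub k - ub (k+1)‖ ^ 2 / (2 * σ) + ‖vb k - vb (k+1)‖ ^ 2 / (2 * τ) := by
        positivity
      linarith
  exact ⟨hanti, _, tendsto_atTop_ciInf hanti
    ⟨0, by rintro _ ⟨k, rfl⟩; exact energy_nonneg K hσ hτ _ _ _ _⟩⟩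

lemma tendsto_zero_of_sq_div_le {H : Type*} [NormedAddCommGroup H] {a : ℕ → H} {e : ℕ → ℝ} {c : ℝ}
    (hc : 0 < c) (he : Tendsto e atTop (nhds 0)) (ha : ∀ k, ‖a k‖ ^ 2 / (2 * c) ≤ e k) :
    Tendsto a atTop (nhds 0) := by
  have h0 := (squeeze_zero (fun k => by positivity) ha he).const_mul (2 * c)
  have h1 : Tendsto (fun k => ‖a k‖ ^ 2) atTop (nhds 0) := by
    simpa [mul_div_cancel₀, hc.ne'] using h0
  rw [tendsto_zero_iff_norm_tendsto_zero]
  simpa using h1.sqrt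

/-- Asymptotic regularity: the steps tend to zero. -/
lemma steps_tendsto_zero {K : X →L[ℝ] Y} {F : X → EReal} {G : Y → EReal} (hF : Proper F)
    (hG : Proper G) {σ τ : ℝ} (hσ : 0 < σ) (hτ : 0 < τ) {u : ℕ → X} {v : ℕ → Y} {ub : ℕ → X}
    {vb : ℕ → Y} (h : IsDR K F G σ τ u v ub vb) {xs : X} {ys : Y} (hs : IsSaddle K F G xs ys) :
    Tendsto (fun k => ub k - ub (k+1)) atTop (nhds 0) ∧
      Tendsto (fun k => vb k - vb (k+1)) atTop (nhds 0) := by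
  obtain ⟨_, l, hl⟩ := exists_tendsto_energy hF hG hσ hτ h hs
  have hd := hl.sub ((tendsto_add_atTop_iff_nat 1).2 hl)
  rw [sub_self] at hd
  constructor
  · refine tendsto_zero_of_sq_div_le hσ hd fun k => le_trans ?_ (fejer hF hG hσ hτ h hs k)
    have : 0 ≤ ‖vb k - vb (k+1)‖ ^ 2 / (2 * τ) := by positivity
    linarith
  · refine tendsto_zero_of_sq_div_le hτ hd fun k => le_trans ?_ (fejer hF hG hσ hτ h hs k)
    have : 0 ≤ ‖ub k - ub (k+1)‖ ^ 2 / (2 * σ) := by positivity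
    linarith

/-! ### Boundedness of the iterates -/

/-- Skewness of `(x, y) ↦ (K* y, -K x)` makes `(x, y) ↦ (x - σ K* y, y + τ K x)` expansive in the
weighted norm. -/
lemma skew_expansive (K : X →L[ℝ] Y) {σ τ : ℝ} (hσ : 0 < σ) (hτ : 0 < τ) (p : X) (q : Y) :
    ‖p‖ ^ 2 / σ + ‖q‖ ^ 2 / τ
      ≤ ‖p - σ • (ContinuousLinearMap.adjoint K) q‖ ^ 2 / σ + ‖q + τ • K p‖ ^ 2 / τ := by
  have h : ‖p - σ • (ContinuousLinearMap.adjoint K) q‖ ^ 2 / σ + ‖q + τ • K p‖ ^ 2 / τ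
      = ‖p‖ ^ 2 / σ + ‖q‖ ^ 2 / τ
        + (σ * ‖(ContinuousLinearMap.adjoint K) q‖ ^ 2 + τ * ‖K p‖ ^ 2) := by
    rw [norm_sub_sq_real, norm_add_sq_real, real_inner_smul_right, real_inner_smul_right,
      ContinuousLinearMap.adjoint_inner_right, norm_smul, norm_smul, mul_pow, mul_pow,
      Real.norm_eq_abs, Real.norm_eq_abs, sq_abs, sq_abs, real_inner_comm (K p) q]
    field_simp
    ring
  rw [h]
  have : 0 ≤ σ * ‖(ContinuousLinearMap.adjoint K) q‖ ^ 2 + τ * ‖K p‖ ^ 2 := by positivity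
  linarith

lemma norm_le_of_sq_div_le {H : Type*} [NormedAddCommGroup H] {a : H} {c e : ℝ} (hc : 0 < c)
    (h : ‖a‖ ^ 2 / c ≤ e) : ‖a‖ ≤ √(e * c) :=
  Real.le_sqrt_of_sq_le ((div_le_iff₀ hc).1 h)

lemma bounded_iterates {K : X →L[ℝ] Y} {F : X → EReal} {G : Y → EReal} (hF : Proper F)
    (hG : Proper G) {σ τ : ℝ} (hσ : 0 < σ) (hτ : 0 < τ) {u : ℕ → X} {v : ℕ → Y} {ub : ℕ → X}
    {vb : ℕ → Y} (h : IsDR K F G σ τ u v ub vb) {xs : X} {ys : Y} (hs : IsSaddle K F G xs ys) :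
    ∃ C₁ C₂ C₃ C₄ : ℝ, ∀ k, ‖ub k‖ ≤ C₁ ∧ ‖vb k‖ ≤ C₂ ∧ ‖u (k+1)‖ ≤ C₃ ∧ ‖v (k+1)‖ ≤ C₄ := by
  obtain ⟨hanti, -⟩ := exists_tendsto_energy hF hG hσ hτ h hs
  obtain ⟨C₁, hC₁⟩ : ∃ C, ∀ k, ‖ub k‖ ≤ C := by
    refine ⟨√(energy K σ τ xs ys (ub 0) (vb 0) * (2 * σ))
      + ‖xs - σ • (ContinuousLinearMap.adjoint K) ys‖, fun k => ?_⟩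
    have h1 : ‖ub k - (xs - σ • (ContinuousLinearMap.adjoint K) ys)‖ ^ 2 / (2 * σ)
        ≤ energy K σ τ xs ys (ub 0) (vb 0) := by
      refine le_trans ?_ (hanti (Nat.zero_le k))
      rw [← sub_add]
      exact le_add_of_nonneg_right (by positivity)
    have h2 := norm_le_of_sq_div_le (by positivity) h1
    have h3 := norm_sub_norm_le (ub k) (xs - σ • (ContinuousLinearMap.adjoint K) ys)
    linarith
  obtain ⟨C₂, hC₂⟩ : ∃ C, ∀ k, ‖vb k‖ ≤ C := by
    refine ⟨√(energy K σ τ xs ys (ub 0) (vb 0) * (2 * τ)) + ‖ys + τ • K xs‖, fun k => ?_⟩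
    have h1 : ‖vb k - (ys + τ • K xs)‖ ^ 2 / (2 * τ) ≤ energy K σ τ xs ys (ub 0) (vb 0) := by
      refine le_trans ?_ (hanti (Nat.zero_le k))
      rw [← sub_sub]
      exact le_add_of_nonneg_left (by positivity)
    have h2 := norm_le_of_sq_div_le (by positivity) h1
    have h3 := norm_sub_norm_le (vb k) (ys + τ • K xs)
    linarith
  set M₁ := C₁ + σ * (‖ContinuousLinearMap.adjoint K‖ * (C₂ + C₂))
  set M₂ := C₂ + τ * (‖K‖ * (C₁ + C₁))
  have hM : ∀ k, ‖u (k+1)‖ ^ 2 / σ + ‖v (k+1)‖ ^ 2 / τ ≤ M₁ ^ 2 / σ + M₂ ^ 2 / τ := by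
    intro k
    refine (skew_expansive K hσ hτ _ _).trans ?_
    obtain ⟨-, -, h3, h4⟩ := h k
    have e1 : u (k+1) - σ • (ContinuousLinearMap.adjoint K) (v (k+1))
        = ub (k+1) + σ • (ContinuousLinearMap.adjoint K) (vb (k+1) - vb k) := by
      rw [h3, add_sub_assoc (v (k+1)), map_add, smul_add]; abel
    have e2 : v (k+1) + τ • K (u (k+1)) = vb (k+1) - τ • K (ub (k+1) - ub k) := by
      rw [h4, add_sub_assoc (u (k+1)), map_add, smul_add]; abel
    have n1 : ‖u (k+1) - σ • (ContinuousLinearMap.adjoint K) (v (k+1))‖ ≤ M₁ := by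
      rw [e1]
      refine (norm_add_le _ _).trans (add_le_add (hC₁ _) ?_)
      rw [norm_smul, Real.norm_of_nonneg hσ.le]
      gcongr
      refine (ContinuousLinearMap.le_opNorm _ _).trans ?_
      gcongr
      exact (norm_sub_le _ _).trans (add_le_add (hC₂ _) (hC₂ _))
    have n2 : ‖v (k+1) + τ • K (u (k+1))‖ ≤ M₂ := by
      rw [e2]
      refine (norm_sub_le _ _).trans (add_le_add (hC₂ _) ?_)
      rw [norm_smul, Real.norm_of_nonneg hτ.le]
      gcongr
      refine (ContinuousLinearMap.le_opNorm _ _).trans ?_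
      gcongr
      exact (norm_sub_le _ _).trans (add_le_add (hC₁ _) (hC₁ _))
    gcongr
  refine ⟨C₁, C₂, _, _, fun k => ⟨hC₁ k, hC₂ k,
    norm_le_of_sq_div_le hσ ((le_add_of_nonneg_right (by positivity)).trans (hM k)),
    norm_le_of_sq_div_le hτ ((le_add_of_nonneg_left (by positivity)).trans (hM k))⟩⟩

lemma tendsto_sq_diff {H : Type*} [NormedAddCommGroup H] {b : ℕ → H} {C : ℝ}
    (hb : ∀ k, ‖b k‖ ≤ C) (hd : Tendsto (fun k => b k - b (k+1)) atTop (nhds 0)) (c : H) :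
    Tendsto (fun k => ‖b k - c‖ ^ 2 - ‖b (k+1) - c‖ ^ 2) atTop (nhds 0) := by
  have h0 := (tendsto_zero_iff_norm_tendsto_zero.1 hd).mul_const ((C + ‖c‖) + (C + ‖c‖))
  rw [zero_mul] at h0
  refine squeeze_zero_norm (fun k => ?_) h0
  have hn : ∀ k, ‖b k - c‖ ≤ C + ‖c‖ := fun k =>
    (norm_sub_le _ _).trans (add_le_add (hb k) le_rfl)
  rw [sq_sub_sq, Real.norm_eq_abs, abs_mul, mul_comm]
  refine mul_le_mul ?_ ?_ (abs_nonneg _) (norm_nonneg _)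
  · simpa using abs_norm_sub_norm_le (b k - c) (b (k+1) - c)
  · rw [abs_of_nonneg (by positivity)]
    exact add_le_add (hn _) (hn _)

lemma energy_eq (K : X →L[ℝ] Y) (σ τ : ℝ) (x xb : X) (y yb : Y) :
    energy K σ τ x y xb yb = ‖xb - (x - σ • (ContinuousLinearMap.adjoint K) y)‖ ^ 2 / (2 * σ)
      + ‖yb - (y + τ • K x)‖ ^ 2 / (2 * τ) := by
  rw [energy, ← sub_add, ← sub_sub]

lemma energy_diff_tendsto {K : X →L[ℝ] Y} {F : X → EReal} {G : Y → EReal} (hF : Proper F)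
    (hG : Proper G) {σ τ : ℝ} (hσ : 0 < σ) (hτ : 0 < τ) {u : ℕ → X} {v : ℕ → Y} {ub : ℕ → X}
    {vb : ℕ → Y} (h : IsDR K F G σ τ u v ub vb) {xs : X} {ys : Y} (hs : IsSaddle K F G xs ys)
    (x : X) (y : Y) :
    Tendsto (fun k => energy K σ τ x y (ub k) (vb k) - energy K σ τ x y (ub (k+1)) (vb (k+1)))
      atTop (nhds 0) := by
  obtain ⟨C₁, C₂, _, _, hC⟩ := bounded_iterates hF hG hσ hτ h hs
  obtain ⟨d1, d2⟩ := steps_tendsto_zero hF hG hσ hτ h hs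
  have t1 := (tendsto_sq_diff (fun k => (hC k).1) d1
    (x - σ • (ContinuousLinearMap.adjoint K) y)).div_const (2 * σ)
  have t2 := (tendsto_sq_diff (fun k => (hC k).2.1) d2 (y + τ • K x)).div_const (2 * τ)
  have t := t1.add t2
  simp only [zero_div, add_zero] at t
  refine t.congr fun k => ?_
  rw [energy_eq, energy_eq]
  ring

/-! ### Weak limits are saddle points -/

lemma isSaddle_of_forall_le {K : X →L[ℝ] Y} {F : X → EReal} {G : Y → EReal} (hF : Proper F)
    (hG : Proper G) {p : X} {q : Y}
    (h : ∀ x ∈ edom F, ∀ y ∈ edom G, F p + G q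
      ≤ (((F x).toReal + (G y).toReal - ⟪K p, y⟫ + ⟪K x, q⟫ : ℝ) : EReal)) :
    IsSaddle K F G p q := by
  obtain ⟨x0, hx0⟩ := hF.2
  obtain ⟨y0, hy0⟩ := hG.2
  have h0 := h x0 hx0 y0 hy0
  have hp : p ∈ edom F := fun hp => by
    rw [hp, EReal.top_add_of_ne_bot (hG.1 q)] at h0
    exact EReal.coe_ne_top _ (top_le_iff.1 h0)
  have hq : q ∈ edom G := fun hq => by
    rw [hq, EReal.add_top_of_ne_bot (hF.1 p)] at h0
    exact EReal.coe_ne_top _ (top_le_iff.1 h0)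
  have h' : ∀ x ∈ edom F, ∀ y ∈ edom G, (F p).toReal + (G q).toReal
      ≤ (F x).toReal + (G y).toReal - ⟪K p, y⟫ + ⟪K x, q⟫ := fun x hx y hy => by
    have := h x hx y hy
    rw [← coe_toReal_of_edom hF hp, ← coe_toReal_of_edom hG hq] at this
    exact_mod_cast this
  refine ⟨hp, hq, fun z => ?_, fun z => ?_⟩
  · by_cases hz : F z = ⊤
    · rw [hz]; exact le_top
    rw [← coe_toReal_of_edom hF hp, ← coe_toReal_of_edom hF hz]
    have := h' z hz q hq
    have e : ⟪-(ContinuousLinearMap.adjoint K) q, z - p⟫ = ⟪K p, q⟫ - ⟪K z, q⟫ := by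
      rw [inner_neg_left, ContinuousLinearMap.adjoint_inner_left, real_inner_comm, map_sub,
        inner_sub_left]
      ring
    rw [e]
    exact_mod_cast (by linarith : (F p).toReal + (⟪K p, q⟫ - ⟪K z, q⟫) ≤ (F z).toReal)
  · by_cases hz : G z = ⊤
    · rw [hz]; exact le_top
    rw [← coe_toReal_of_edom hG hq, ← coe_toReal_of_edom hG hz, inner_sub_right]
    have := h' p hp z hz
    exact_mod_cast (by linarith : (G q).toReal + (⟪K p, z⟫ - ⟪K p, q⟫) ≤ (G z).toReal)

/-- Demiclosedness: a weak limit of the iterates along an ultrafilter is a saddle point, since the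
one-step estimate passes to the limit. -/
lemma isSaddle_of_weak_limit {K : X →L[ℝ] Y} {F : X → EReal} {G : Y → EReal} (hF : Proper F)
    (hFc : ConvexE F) (hFl : LowerSemicontinuous F) (hG : Proper G) (hGc : ConvexE G)
    (hGl : LowerSemicontinuous G) {σ τ : ℝ} (hσ : 0 < σ) (hτ : 0 < τ) {u : ℕ → X} {v : ℕ → Y}
    {ub : ℕ → X} {vb : ℕ → Y} (h : IsDR K F G σ τ u v ub vb) {xs : X} {ys : Y}
    (hs : IsSaddle K F G xs ys) {U : Ultrafilter ℕ} (hU : (U : Filter ℕ) ≤ atTop) {p : X} {q : Y}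
    (hp : ∀ w : X, Tendsto (fun k => ⟪u (k+1), w⟫) U (nhds ⟪p, w⟫))
    (hq : ∀ w : Y, Tendsto (fun k => ⟪v (k+1), w⟫) U (nhds ⟪q, w⟫)) :
    IsSaddle K F G p q := by
  refine isSaddle_of_forall_le hF hG fun x hx y hy => ?_
  refine EReal.add_le_of_forall_lt fun a' ha' b' hb' => ?_
  obtain ⟨a, haa, ha⟩ := EReal.lt_iff_exists_real_btwn.1 ha'
  obtain ⟨b, hbb, hb⟩ := EReal.lt_iff_exists_real_btwn.1 hb'
  refine (add_le_add haa.le hbb.le).trans ?_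
  suffices a + b ≤ (F x).toReal + (G y).toReal - ⟪K p, y⟫ + ⟪K x, q⟫ by exact_mod_cast this
  have t1 : Tendsto (fun k => ⟪K (u (k+1)), y⟫) U (nhds ⟪K p, y⟫) := by
    simpa only [ContinuousLinearMap.adjoint_inner_right] using
      hp ((ContinuousLinearMap.adjoint K) y)
  have t2 : Tendsto (fun k => ⟪K x, v (k+1)⟫) U (nhds ⟪K x, q⟫) := by
    simpa only [real_inner_comm (K x)] using hq (K x)
  have t3 := (energy_diff_tendsto hF hG hσ hτ h hs x y).mono_left hU
  have t := ((t1.const_sub ((F x).toReal + (G y).toReal)).add t2).add t3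
  rw [add_zero] at t
  refine ge_of_tendsto t ?_
  filter_upwards [eventually_lt_of_weak_s7 hFc hFl hp ha, eventually_lt_of_weak_s7 hGc hGl hq hb]
    with k hka hkb
  rw [← coe_toReal_of_edom hF (mem_edom_of_mem_ediff hF (h k).1)] at hka
  rw [← coe_toReal_of_edom hG (mem_edom_of_mem_ediff hG (h k).2.1)] at hkb
  have hka := EReal.coe_lt_coe_iff.1 hka
  have hkb := EReal.coe_lt_coe_iff.1 hkb
  have hst := dr_step hF hG hσ hτ h hx hy k
  have h0 : 0 ≤ ‖ub k - ub (k+1)‖ ^ 2 / (2 * σ) + ‖vb k - vb (k+1)‖ ^ 2 / (2 * τ) := by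
    positivity
  linarith

/-! ### Uniqueness of the weak limit -/

/-- If `u`, `v` converge weakly to `p`, `q` along an ultrafilter, then the shadow sequences converge
weakly to the fixed point associated with `(p, q)`. -/
lemma shadow_weak_limit {K : X →L[ℝ] Y} {F : X → EReal} {G : Y → EReal} (hF : Proper F)
    (hG : Proper G) {σ τ : ℝ} (hσ : 0 < σ) (hτ : 0 < τ) {u : ℕ → X} {v : ℕ → Y}
    {ub : ℕ → X} {vb : ℕ → Y} (h : IsDR K F G σ τ u v ub vb) {xs : X} {ys : Y}
    (hs : IsSaddle K F G xs ys) {U : Ultrafilter ℕ} (hU : (U : Filter ℕ) ≤ atTop) {p : X} {q : Y}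
    (hp : ∀ w : X, Tendsto (fun k => ⟪u (k+1), w⟫) U (nhds ⟪p, w⟫))
    (hq : ∀ w : Y, Tendsto (fun k => ⟪v (k+1), w⟫) U (nhds ⟪q, w⟫)) :
    (∀ w : X, Tendsto (fun k => ⟪ub (k+1), w⟫) U
        (nhds ⟪p - σ • (ContinuousLinearMap.adjoint K) q, w⟫)) ∧
      ∀ w : Y, Tendsto (fun k => ⟪vb (k+1), w⟫) U (nhds ⟪q + τ • K p, w⟫) := by
  obtain ⟨d1, d2⟩ := steps_tendsto_zero hF hG hσ hτ h hs
  have s1 : ∀ w : X, Tendsto (fun k => ⟪ub k - ub (k+1), w⟫) U (nhds 0) := fun w => by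
    simpa using (d1.mono_left hU).inner (tendsto_const_nhds (x := w))
  have s2 : ∀ w : Y, Tendsto (fun k => ⟪vb k - vb (k+1), w⟫) U (nhds 0) := fun w => by
    simpa using (d2.mono_left hU).inner (tendsto_const_nhds (x := w))
  constructor
  · intro w
    have t := (hp w).sub (((hq (K w)).sub (s2 (K w))).const_mul σ)
    rw [sub_zero] at t
    rw [inner_sub_left, real_inner_smul_left, ContinuousLinearMap.adjoint_inner_left]
    refine t.congr fun k => ?_
    rw [(h k).2.2.1, inner_sub_left (u (k+1)), real_inner_smul_left,
      ContinuousLinearMap.adjoint_inner_left]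
    simp only [inner_sub_left, inner_add_left]
    ring
  · intro w
    have t := (hq w).add (((hp ((ContinuousLinearMap.adjoint K) w)).sub
      (s1 ((ContinuousLinearMap.adjoint K) w))).const_mul τ)
    rw [sub_zero, ContinuousLinearMap.adjoint_inner_right] at t
    rw [inner_add_left, real_inner_smul_left]
    refine t.congr fun k => ?_
    rw [(h k).2.2.2, inner_add_left (v (k+1)), real_inner_smul_left,
      ← ContinuousLinearMap.adjoint_inner_right]
    simp only [inner_sub_left, inner_add_left]
    ring

/-- Opial's argument: any two saddle points that are weak limits along ultrafilters coincide. The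
difference of their energies converges and is affine in the shadow sequences, so its linear part
takes the same value at the two fixed points. -/
lemma weak_limit_unique {K : X →L[ℝ] Y} {F : X → EReal} {G : Y → EReal} (hF : Proper F)
    (hG : Proper G) {σ τ : ℝ} (hσ : 0 < σ) (hτ : 0 < τ) {u : ℕ → X} {v : ℕ → Y}
    {ub : ℕ → X} {vb : ℕ → Y} (h : IsDR K F G σ τ u v ub vb) {U V : Ultrafilter ℕ}
    (hU : (U : Filter ℕ) ≤ atTop) (hV : (V : Filter ℕ) ≤ atTop) {p p' : X} {q q' : Y}
    (hs : IsSaddle K F G p q) (hs' : IsSaddle K F G p' q')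
    (hp : ∀ w : X, Tendsto (fun k => ⟪u (k+1), w⟫) U (nhds ⟪p, w⟫))
    (hq : ∀ w : Y, Tendsto (fun k => ⟪v (k+1), w⟫) U (nhds ⟪q, w⟫))
    (hp' : ∀ w : X, Tendsto (fun k => ⟪u (k+1), w⟫) V (nhds ⟪p', w⟫))
    (hq' : ∀ w : Y, Tendsto (fun k => ⟪v (k+1), w⟫) V (nhds ⟪q', w⟫)) :
    p = p' ∧ q = q' := by
  obtain ⟨b1, b2⟩ := shadow_weak_limit hF hG hσ hτ h hs hU hp hq
  obtain ⟨b1', b2'⟩ := shadow_weak_limit hF hG hσ hτ h hs' hV hp' hq'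
  obtain ⟨-, l, hl⟩ := exists_tendsto_energy hF hG hσ hτ h hs
  obtain ⟨-, l', hl'⟩ := exists_tendsto_energy hF hG hσ hτ h hs'
  have hsk := skew_expansive K hσ hτ (p - p') (q - q')
  set c := p - σ • (ContinuousLinearMap.adjoint K) q with hc
  set c' := p' - σ • (ContinuousLinearMap.adjoint K) q' with hc'
  set d := q + τ • K p with hd
  set d' := q' + τ • K p' with hd'
  have ec : p - p' - σ • (ContinuousLinearMap.adjoint K) (q - q') = c - c' := by
    rw [hc, hc', map_sub, smul_sub]; abel
  have ed : q - q' + τ • K (p - p') = d - d' := by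
    rw [hd, hd', map_sub, smul_sub]; abel
  have hlim := (tendsto_add_atTop_iff_nat 1).2 (hl'.sub hl)
  have hlin : Tendsto (fun k => σ⁻¹ * ⟪ub (k+1), c - c'⟫ + τ⁻¹ * ⟪vb (k+1), d - d'⟫) atTop
      (nhds (l' - l - ((‖c'‖ ^ 2 - ‖c‖ ^ 2) / (2 * σ) + (‖d'‖ ^ 2 - ‖d‖ ^ 2) / (2 * τ)))) := by
    refine (hlim.sub_const _).congr fun k => ?_
    rw [energy_eq, energy_eq, ← hc, ← hc', ← hd, ← hd']
    simp only [norm_sub_sq_real, inner_sub_right]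
    field_simp
    ring
  have e1 := tendsto_nhds_unique (hlin.mono_left hU)
    (((b1 (c - c')).const_mul σ⁻¹).add ((b2 (d - d')).const_mul τ⁻¹))
  have e2 := tendsto_nhds_unique (hlin.mono_left hV)
    (((b1' (c - c')).const_mul σ⁻¹).add ((b2' (d - d')).const_mul τ⁻¹))
  have e3 : ‖c - c'‖ ^ 2 / σ + ‖d - d'‖ ^ 2 / τ = 0 := by
    rw [← real_inner_self_eq_norm_sq, ← real_inner_self_eq_norm_sq, inner_sub_left (x := c),
      inner_sub_left (x := d), div_eq_inv_mul, div_eq_inv_mul]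
    linarith
  rw [ec, ed, e3] at hsk
  have n1 : 0 ≤ ‖p - p'‖ ^ 2 / σ := by positivity
  have n2 : 0 ≤ ‖q - q'‖ ^ 2 / τ := by positivity
  have z1 : ‖p - p'‖ ^ 2 / σ = 0 := by linarith
  have z2 : ‖q - q'‖ ^ 2 / τ = 0 := by linarith
  simp only [div_eq_zero_iff, hσ.ne', hτ.ne', or_false, pow_eq_zero_iff, ne_eq,
    OfNat.ofNat_ne_zero, not_false_eq_true, norm_eq_zero, sub_eq_zero] at z1 z2
  exact ⟨z1, z2⟩

/-- Cesàro means of a weakly convergent sequence have the same weak limit. -/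
lemma WeakTendsto.cesaro {u a : ℕ → X} {z : X} (h : WeakTendsto u z)
    (ha : ∀ k : ℕ, a k = (k : ℝ)⁻¹ • ∑ j ∈ Finset.range k, u (j+1)) : WeakTendsto a z := by
  intro w
  refine ((tendsto_add_atTop_iff_nat 1).2 (h w)).cesaro.congr fun k => ?_
  rw [ha, real_inner_smul_left, sum_inner]

/-- Theorem: `O(1/k)` ergodic convergence of the restricted primal-dual gap
for the basic Douglas--Rachford iteration. -/
theorem statement7
    (F : X → EReal) (G : Y → EReal) (K : X →L[ℝ] Y)
    (hFp : Proper F) (hFc : ConvexE F) (hFl : LowerSemicontinuous F)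
    (hGp : Proper G) (hGc : ConvexE G) (hGl : LowerSemicontinuous G)
    (X₀ : Set X) (Y₀ : Set Y) (hX₀ : X₀ ⊆ edom F) (hY₀ : Y₀ ⊆ edom G)
    (hX₀b : Bornology.IsBounded X₀) (hY₀b : Bornology.IsBounded Y₀)
    (hsad : ∃ xs ∈ X₀, ∃ ys ∈ Y₀, IsSaddle K F G xs ys)
    (σ τ : ℝ) (hσ : 0 < σ) (hτ : 0 < τ)
    (u : ℕ → X) (v : ℕ → Y) (ub : ℕ → X) (vb : ℕ → Y)
    (hDR : IsDR K F G σ τ u v ub vb)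
    (uerg : ℕ → X) (verg : ℕ → Y)
    (huerg : ∀ k : ℕ, uerg k = (k : ℝ)⁻¹ • ∑ j ∈ Finset.range k, u (j+1))
    (hverg : ∀ k : ℕ, verg k = (k : ℝ)⁻¹ • ∑ j ∈ Finset.range k, v (j+1)) :
    ∃ xs : X, ∃ ys : Y, IsSaddle K F G xs ys ∧
      WeakTendsto u xs ∧ WeakTendsto v ys ∧
      WeakTendsto uerg xs ∧ WeakTendsto verg ys ∧
      ∀ k : ℕ, 1 ≤ k →
        gap K F G X₀ Y₀ (uerg k) (verg k) ≤
          (((k : ℝ)⁻¹ : ℝ) : EReal) *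
            ⨆ x ∈ X₀, ⨆ y ∈ Y₀,
              (((‖ub 0 - x + σ • (ContinuousLinearMap.adjoint K) y‖ ^ 2 / (2 * σ)
                + ‖vb 0 - y - τ • K x‖ ^ 2 / (2 * τ) : ℝ)) : EReal) := by
  obtain ⟨x0, hx0, y0, hy0, hs⟩ := hsad
  obtain ⟨_, _, C₃, C₄, hC⟩ := bounded_iterates hFp hGp hσ hτ hDR hs
  -- Every ultrafilter finer than `atTop` yields a saddle point as weak limit of the iterates.
  have lim : ∀ U : Ultrafilter ℕ, (U : Filter ℕ) ≤ atTop → ∃ p q, IsSaddle K F G p q ∧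
      (∀ w : X, Tendsto (fun k => ⟪u (k+1), w⟫) U (nhds ⟪p, w⟫)) ∧
      ∀ w : Y, Tendsto (fun k => ⟪v (k+1), w⟫) U (nhds ⟪q, w⟫) := by
    intro U hU
    obtain ⟨p, hp⟩ := exists_weak_limit (fun k => (hC k).2.2.1) U
    obtain ⟨q, hq⟩ := exists_weak_limit (fun k => (hC k).2.2.2) U
    exact ⟨p, q, isSaddle_of_weak_limit hFp hFc hFl hGp hGc hGl hσ hτ hDR hs hU hp hq, hp, hq⟩
  obtain ⟨xs, ys, hsol, hxs, hys⟩ := lim (Ultrafilter.of atTop) (Ultrafilter.of_le atTop)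
  -- By uniqueness, the limit does not depend on the ultrafilter, so it is a limit along `atTop`.
  have wk : WeakTendsto u xs ∧ WeakTendsto v ys := by
    constructor <;> intro w <;> refine (tendsto_add_atTop_iff_nat 1).1 ?_ <;>
      refine (tendsto_iff_ultrafilter _ _ _).2 fun V hV => ?_ <;>
      obtain ⟨p, q, hpq, hp, hq⟩ := lim V hV <;>
      obtain ⟨rfl, rfl⟩ := weak_limit_unique hFp hGp hσ hτ hDR (Ultrafilter.of_le atTop) hV
        hsol hpq hxs hys hp hq
    · exact hp w
    · exact hq w
  exact ⟨xs, ys, hsol, wk.1, wk.2, wk.1.cesaro huerg, wk.2.cesaro hverg, fun k hk =>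
    gap_le hFp hFc hGp hGc hX₀ hY₀ hσ hτ hDR hk (huerg k) (hverg k)⟩

end
end
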